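/- Let $K$ be an algebraically closed field, $\Gamma$ a Brauer tree of multiplicity one (a finite tree with a cyclic ordering of the edges at each vertex), and $A=KQ_\Gamma/I$ its basic Brauer tree algebra: the vertices of $Q_\Gamma$ are the edges of $\Gamma$; for each vertex $x$ of $\Gamma$ and each edge $i$ at $x$ there is an arrow from $i$ to the edge following $i$ at $x$ (a formal loop if $x$ is a leaf); $I$ is generated by the products of two arrows belonging to different vertices of $\Gamma$ and by the differences of the two full cycles starting at the same vertex of $Q_\Gamma$. Paths are multiplied in the order in which they are passed. The $A$-cycles of $A$ are the oriented cycles of $Q_\Gamma$ given by the vertices of $\Gamma$; each vertex of $Q_\Gamma$ lies on exactly two of them. Let $K^b(A)$ be the bounded homotopy category of finitely generated projective left $A$-modules, and let $T$ be a basic tilting complex over $A$ concentrated in degrees $0$ and $1$. A diagram is a connected path in $Q_\Gamma$ without self-intersections, consisting of more than one vertex, which changes its orientation exactly when it changes its $A$-cycle; its marked vertices are its two end points and the vertices at which it changes $A$-cycle. They are alternately sources and sinks, and those which are end points of the diagram are said to be of degree one. The complex of the diagram is $\bigoplus_{i\text{ source}}Ae_i\to\bigoplus_{j\text{ sink}}Ae_j$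 in degrees $0$ and $1$, whose components are right multiplications by the directed subpaths of the diagram from sources to neighbouring sinks. The algebra $\mathrm{End}_{K^b(A)}(T)$ (with the product $fg$ meaning $f$ followed by $g$) is the Brauer tree algebra with multiplicity one of a Brauer tree $\Gamma'$, whose edges correspond to the indecomposable summands of $T$ by means of the primitive idempotents. Let $\Upsilon$ be an $A$-cycle of $A$ and let $\Psi$ be an $A$-cycle of $\mathrm{End}_{K^b(A)}(T)$, that is, a vertex of $\Gamma'$, corresponding to the sources on $\Upsilon$: the edges incident to $\Psi$ are exactly the indecomposable summands of $T$ which are isomorphic either to the complex of a diagram having a degree-one source on $\Upsilon$ and no other vertex on $\Upsilon$, or to the stalk complex in degree $0$ of $Ae_i$ for a vertex $i$ on $\Upsilon$. To such a summand associate the sequence of the marked vertices of its diagram, in their order on the diagram starting from the degree-one source on $\Upsilon$; for the stalk complex of $Ae_i$ the sequence is $(i)$. Fix a vertex of $\Upsilon$ and order the vertices of $\Upsilon$ linearly so that the fixed vertex is the greatest and the vertices become smaller when one follows the arrows from it. Compare the sequences lexicographically: first vertices are compared in this linear order; if the first $p\ge 1$ vertices of two sequences coincide, the $(p+1)$-st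 vertices lie on the other $A$-cycle through the common $p$-th vertex (the one on which the $p$-th vertices were not compared) and are compared there in the linear order for which the $p$-th vertex is the greatest and the vertices become smaller when one follows the arrows from it; an empty spot at an even position is less, and an empty spot at an odd position is greater, than every vertex. Then this is a strict linear order on the edges of $\Gamma'$ incident to $\Psi$, and the cyclic ordering of these edges in $\Gamma'$ coincides with the cyclic ordering glued from it: the edge following a given edge is the greatest one among those less than it, and the edge following the least edge is the greatest edge. -/

import Mathlib

open CategoryTheory

universe u v w

/-- A Brauer tree (of multiplicity one): a finite tree together with a cyclic ordering of the
edges incident to each vertex.  A dart `d` is a half-edge: the edge `{d.fst, d.snd}` regarded as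
one of the edges incident to `d.fst`; `d.symm` is the same edge at its other end.
The permutation `rot` sends a half-edge at a vertex to the one that follows it in the cyclic
ordering at that vertex. -/
structure BrauerTree (V : Type v) where
  finite : Finite V
  graph : SimpleGraph V
  isTree : graph.IsTree
  rot : Equiv.Perm graph.Dart
  rot_fst : ∀ d, (rot d).fst = d.fst
  rot_sameCycle : ∀ d d' : graph.Dart, d.fst = d'.fst → rot.SameCycle d d'

namespace BrauerTree

variable {V : Type v} (Γ : BrauerTree V)

/-- Edges of the tree, that is, vertices of the Brauer quiver. -/
abbrev Edge : Type v := Γ.graph.edgeSet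

/-- Half-edges of the tree. -/
abbrev Dart : Type v := Γ.graph.Dart

/-- The edge underlying a half-edge. -/
def edge (d : Γ.Dart) : Γ.Edge := ⟨d.edge, d.edge_mem⟩

/-- The number of edges incident to a vertex `x` of the tree, that is, the length of the cycle
of the Brauer quiver given by `x`. -/
noncomputable def valency (x : V) : ℕ := (Γ.graph.neighborSet x).ncard

/-- The number of arrows on the directed path from `d` to `d'` along the cycle of the Brauer
quiver that contains both (for half-edges `d`, `d'` at the same vertex of the tree). -/
noncomputable def steps (d d' : Γ.Dart) : ℕ := sInf {k : ℕ | (Γ.rot)^[k] d = d'}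

/-! ### The Brauer tree algebra -/

/-- Generators of the algebra: the trivial paths of the Brauer quiver (one for each edge of the
tree) and its arrows (one for each half-edge `d`, from the edge of `d` to the edge of `rot d`).
The cycles of the quiver are the vertices `x` of the tree: the arrows of the cycle `x` are the
half-edges `d` with `d.fst = x` (for a leaf `x` this is the formal loop). -/
inductive Gen : Type v
  | idem (e : Γ.Edge) : Gen
  | arrow (d : Γ.Dart) : Gen

variable (K : Type u) [Field K]

/-- The product `d, rot d, rot² d, …` of `k` consecutive arrows of one cycle, starting with the
arrow of `d`; products of arrows are written in the order in which they are passed. -/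
def freePath : Γ.Dart → ℕ → FreeAlgebra K Γ.Gen
  | d, 0 => FreeAlgebra.ι K (Gen.idem (Γ.edge d))
  | d, k + 1 => FreeAlgebra.ι K (Gen.arrow d) * freePath (Γ.rot d) k

/-- Defining relations of the basic Brauer tree algebra of multiplicity one.  The first five
present the path algebra of the Brauer quiver; the last two are the Brauer relations:
the product of two arrows of different cycles is zero, and the two full cycles that start at
the same vertex of the quiver are equal. -/
inductive Rel : FreeAlgebra K Γ.Gen → FreeAlgebra K Γ.Gen → Prop
  | idem_mul_self (e : Γ.Edge) :
      Rel (FreeAlgebra.ι K (Gen.idem e) * FreeAlgebra.ι K (Gen.idem e))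
        (FreeAlgebra.ι K (Gen.idem e))
  | idem_mul_idem (e f : Γ.Edge) (h : e ≠ f) :
      Rel (FreeAlgebra.ι K (Gen.idem e) * FreeAlgebra.ι K (Gen.idem f)) 0
  | sum_idem : Rel (∑ᶠ e : Γ.Edge, FreeAlgebra.ι K (Gen.idem e)) 1
  | source (d : Γ.Dart) :
      Rel (FreeAlgebra.ι K (Gen.idem (Γ.edge d)) * FreeAlgebra.ι K (Gen.arrow d))
        (FreeAlgebra.ι K (Gen.arrow d))
  | target (d : Γ.Dart) :
      Rel (FreeAlgebra.ι K (Gen.arrow d) * FreeAlgebra.ι K (Gen.idem (Γ.edge (Γ.rot d))))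
        (FreeAlgebra.ι K (Gen.arrow d))
  | change_cycle (d : Γ.Dart) :
      Rel (FreeAlgebra.ι K (Gen.arrow d) * FreeAlgebra.ι K (Gen.arrow (Γ.rot d).symm)) 0
  | full_cycle (d : Γ.Dart) :
      Rel (Γ.freePath K d (Γ.valency d.fst)) (Γ.freePath K d.symm (Γ.valency d.snd))

/-- The basic Brauer tree algebra of `Γ` over `K`, with multiplicity one. -/
def Alg : Type (max u v) := RingQuot (Γ.Rel K)

noncomputable instance : Ring (Γ.Alg K) := inferInstanceAs (Ring (RingQuot (Γ.Rel K)))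

noncomputable instance : Algebra K (Γ.Alg K) :=
  inferInstanceAs (Algebra K (RingQuot (Γ.Rel K)))

/-- The element of the Brauer tree algebra given by an element of the free algebra. -/
noncomputable def ofFree : FreeAlgebra K Γ.Gen →ₐ[K] Γ.Alg K := RingQuot.mkAlgHom K (Γ.Rel K)

/-- The primitive idempotent of an edge. -/
noncomputable def idem (e : Γ.Edge) : Γ.Alg K :=
  Γ.ofFree K (FreeAlgebra.ι K (Gen.idem e))

/-- The shortest path from `d` to `d'` along the cycle of the quiver containing both (for
half-edges `d`, `d'` at the same vertex of the tree), as an element of the algebra. -/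
noncomputable def arc (d d' : Γ.Dart) : Γ.Alg K :=
  Γ.ofFree K (Γ.freePath K d (Γ.steps d d'))

/-- The indecomposable projective left module `A e`. -/
noncomputable abbrev proj (e : Γ.Edge) : Ideal (Γ.Alg K) := Ideal.span {Γ.idem K e}

/-- The homomorphism `A e → A f` given by right multiplication by `a` (more precisely by the
component `a f` of `a`, which is `a` itself if `a` is a path ending in `f`). -/
noncomputable def mulPath (e f : Γ.Edge) (a : Γ.Alg K) :
    Γ.proj K e →ₗ[Γ.Alg K] Γ.proj K f :=
  ((LinearMap.toSpanSingleton (Γ.Alg K) (Γ.Alg K) (a * Γ.idem K f)).comp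
    (Γ.proj K e).subtype).codRestrict (Γ.proj K f) fun x =>
      Ideal.mul_mem_left _ (x : Γ.Alg K)
        (Ideal.mul_mem_left _ a (Ideal.subset_span (Set.mem_singleton _)))

/-! ### Complexes -/

/-- Cochain complexes of left modules over the Brauer tree algebra. -/
abbrev Cplx := CochainComplex (ModuleCat.{max u v} (Γ.Alg K)) ℤ

/-- The homotopy category of complexes of modules; `K^b(A)` is its full subcategory on the
bounded complexes of finitely generated projective modules. -/
abbrev HoCat := HomotopyCategory (ModuleCat.{max u v} (Γ.Alg K)) (ComplexShape.up ℤ)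

variable {Γ K}

/-- A complex as an object of the homotopy category. -/
noncomputable abbrev toHo (T : Γ.Cplx K) : Γ.HoCat K :=
  (HomotopyCategory.quotient _ _).obj T

/-- All terms of the complex are finitely generated projective modules. -/
def IsFGProj (T : Γ.Cplx K) : Prop :=
  ∀ i : ℤ, Module.Finite (Γ.Alg K) (T.X i) ∧ Module.Projective (Γ.Alg K) (T.X i)

/-- A perfect complex: a bounded complex of finitely generated projective modules. -/
def IsPerfect (T : Γ.Cplx K) : Prop :=
  IsFGProj T ∧ ∃ a b : ℤ, ∀ i : ℤ, i < a ∨ b < i → Limits.IsZero (T.X i)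

/-- A two-term complex of finitely generated projective modules, in degrees `0` and `1`. -/
def IsTwoTerm (T : Γ.Cplx K) : Prop :=
  IsFGProj T ∧ ∀ i : ℤ, i ≠ 0 → i ≠ 1 → Limits.IsZero (T.X i)

/-- Tilting complexes: there are no nonzero morphisms from `T` to its nontrivial shifts, and the
thick subcategory generated by `T` contains all perfect complexes. -/
def IsTilting (T : Γ.Cplx K) : Prop :=
  IsPerfect T ∧
  (∀ i : ℤ, i ≠ 0 → ∀ f : toHo T ⟶ (toHo T)⟦i⟧, f = 0) ∧
  ∀ P : ObjectProperty (Γ.HoCat K), P.IsTriangulated → P.IsStableUnderRetracts →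
    P (toHo T) → ∀ X : Γ.Cplx K, IsPerfect X → P (toHo X)

/-- `T` is basic: it has no two isomorphic nonzero complementary direct summands, that is, if
two copies of `X` together form a direct summand of `T`, then `X` is zero. -/
def IsBasic (T : Γ.Cplx K) : Prop :=
  ∀ (X : Γ.HoCat K) (i₁ i₂ : X ⟶ toHo T) (p₁ p₂ : toHo T ⟶ X),
    i₁ ≫ p₁ = 𝟙 X → i₂ ≫ p₂ = 𝟙 X → i₁ ≫ p₂ = 0 → i₂ ≫ p₁ = 0 → Limits.IsZero X

/-- The endomorphism algebra of `T` in the homotopy category, in which the product of `f` and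
`g` is `f` followed by `g`; with this convention the endomorphism algebra of the left module
`A` is `A` itself, and a path from `i` to `j` is a morphism `A e_i → A e_j`. -/
abbrev EndAlg (T : Γ.Cplx K) := (End (toHo T))ᵐᵒᵖ

variable (K) in
/-- The stalk complex of the projective module `A e` in degree `0`. -/
noncomputable def stalk (e : Γ.Edge) : Γ.Cplx K :=
  (HomologicalComplex.single _ (ComplexShape.up ℤ) 0).obj (ModuleCat.of (Γ.Alg K) (Γ.proj K e))

/-! ### Diagrams -/

/-- The vertices of the quiver on the directed path from `d` to `d'` along the cycle containing
both, end points included. -/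
def arcVertices (d d' : Γ.Dart) : Set Γ.Edge :=
  {e | ∃ k ≤ Γ.steps d d', e = Γ.edge ((Γ.rot)^[k] d)}

/-- For a sequence of half-edges, the `k`-th string: on the cycle `(L k).snd = (L (k + 1)).fst`,
the directed path between the `k`-th and the `(k + 1)`-st marked vertex.  Vertices at even
positions are sources and vertices at odd positions are sinks, so it runs from the `k`-th to the
`(k + 1)`-st vertex if `k` is even and in the opposite direction if `k` is odd. -/
def stringVertices (L : List Γ.Dart) (k : ℕ) (hk : k + 1 < L.length) : Set Γ.Edge :=
  if Even k then arcVertices L[k].symm L[k + 1] else arcVertices L[k + 1] L[k].symm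

variable (Γ) in
/-- A diagram with a degree-one source, read from that source: a path in the quiver without
self-intersections, consisting of more than one vertex, which changes both its `A`-cycle and its
orientation at each inner marked vertex.

The marked vertices `i₀, i₁, …, i_m` are recorded, in their order on the path, as half-edges: the
path arrives at the vertex `Γ.edge d` of the quiver on the `A`-cycle `d.fst` and leaves it on the
other `A`-cycle `d.snd` through it (the first one is not arrived at, and the last one is not
left).  The path starts at a source, so `i₀, i₂, …` are sources and `i₁, i₃, …` are sinks. -/
structure SourceDiagram where
  marked : List Γ.Dart
  two_le : 2 ≤ marked.length
  /-- consecutive marked vertices are different and lie on a common `A`-cycle -/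
  chain : marked.IsChain fun d d' => d.snd = d'.fst ∧ Γ.edge d ≠ Γ.edge d'
  /-- different strings meet at most in the marked vertex at which they are joined -/
  noSelfIntersection : ∀ (k l : ℕ) (_ : k < l) (hk : k + 1 < marked.length)
    (hl : l + 1 < marked.length) (e : Γ.Edge),
    e ∈ stringVertices marked k hk → e ∈ stringVertices marked l hl →
      l = k + 1 ∧ e = Γ.edge marked[l]

/-- The vertices of the quiver, marked or not, which lie on the diagram. -/
def SourceDiagram.vertices (D : Γ.SourceDiagram) : Set Γ.Edge :=
  {e | ∃ (k : ℕ) (hk : k + 1 < D.marked.length), e ∈ stringVertices D.marked k hk}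

/-- The first vertex of the diagram, as a half-edge. -/
def SourceDiagram.first (D : Γ.SourceDiagram) : Γ.Dart :=
  D.marked[0]'(Nat.lt_of_lt_of_le Nat.zero_lt_two D.two_le)

/-- The first vertex of the diagram (a degree-one source) lies on the `A`-cycle `x`, and no other
vertex of the diagram does. -/
def SourceDiagram.StartsAt (D : Γ.SourceDiagram) (x : V) : Prop :=
  x ∈ (Γ.edge D.first : Sym2 V) ∧
    ∀ e ∈ D.vertices, x ∈ (e : Sym2 V) → e = Γ.edge D.first

/-- Positions of the sources of the diagram. -/
abbrev SourceDiagram.Src (D : Γ.SourceDiagram) := {k : Fin D.marked.length // Even k.val}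

/-- Positions of the sinks of the diagram. -/
abbrev SourceDiagram.Snk (D : Γ.SourceDiagram) := {k : Fin D.marked.length // ¬ Even k.val}

variable (K) in
/-- The path of the quiver from the source at position `k` to the sink at position `l`, if the
two are neighbours on the diagram, and zero otherwise. -/
noncomputable def SourceDiagram.entry (D : Γ.SourceDiagram) (k : D.Src) (l : D.Snk) : Γ.Alg K :=
  if l.1.val = k.1.val + 1 then Γ.arc K D.marked[k.1].symm D.marked[l.1]
  else if k.1.val = l.1.val + 1 then Γ.arc K D.marked[k.1] D.marked[l.1].symm
  else 0

variable (K) in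
/-- The differential `⨁_{sources} A e_i → ⨁_{sinks} A e_j` of the complex of the diagram. -/
noncomputable def SourceDiagram.diff (D : Γ.SourceDiagram) :
    ((k : D.Src) → Γ.proj K (Γ.edge D.marked[k.1])) →ₗ[Γ.Alg K]
      ((l : D.Snk) → Γ.proj K (Γ.edge D.marked[l.1])) :=
  LinearMap.pi fun l => ∑ k : D.Src, (Γ.mulPath K _ _ (D.entry K k l)).comp (LinearMap.proj k)

variable (K) in
/-- The two-term complex of the diagram, in degrees `0` and `1`. -/
noncomputable def SourceDiagram.complex (D : Γ.SourceDiagram) : Γ.Cplx K :=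
  HomologicalComplex.double (ModuleCat.ofHom (D.diff K))
    (show (ComplexShape.up ℤ).Rel 0 1 from zero_add 1)

/-! ### The Brauer tree of the endomorphism algebra -/

variable {V' : Type w} {Γ' : BrauerTree V'}

/-- Under an identification `φ` of the endomorphism algebra of `T` with the Brauer tree algebra
of `Γ'`, the edge `e` of `Γ'` corresponds to the direct summand `X` of `T`: `X` is the image of
the idempotent endomorphism of `T` given by `e`. -/
def SummandAt {T : Γ.Cplx K} (φ : EndAlg T ≃ₐ[K] Γ'.Alg K) (e : Γ'.Edge) (X : Γ.Cplx K) : Prop :=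
  ∃ (i : toHo X ⟶ toHo T) (p : toHo T ⟶ toHo X),
    i ≫ p = 𝟙 (toHo X) ∧ p ≫ i = (φ.symm (Γ'.idem K e)).unop

/-- The edge `e` of `Γ'` corresponds to a direct summand of `T` of source type on the `A`-cycle
`x` of `A`, with associated ordered set `L` of (marked) vertices: the summand is either the stalk
complex in degree `0` of the projective module of a vertex on `x` (and `L` consists of this
vertex), or the complex of a diagram with a degree-one source on `x` and no other vertex on `x`
(and `L` consists of its marked vertices, starting from this source). -/
def SourceSummand {T : Γ.Cplx K} (φ : EndAlg T ≃ₐ[K] Γ'.Alg K) (x : V) (e : Γ'.Edge)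
    (L : List Γ.Dart) : Prop :=
  (∃ d : Γ.Dart, d.fst = x ∧ L = [d] ∧ SummandAt φ e (stalk K (Γ.edge d))) ∨
  (∃ D : Γ.SourceDiagram, D.StartsAt x ∧ L = D.marked ∧ SummandAt φ e (D.complex K))

/-- The vertex `y` of the Brauer tree `Γ'` of the endomorphism algebra of `T` is the `A`-cycle
corresponding to the sources on the `A`-cycle `x` of `A`: the edges incident to it are exactly
those of the direct summands of source type on `x`. -/
def IsSourceCycle {T : Γ.Cplx K} (φ : EndAlg T ≃ₐ[K] Γ'.Alg K) (x : V) (y : V') : Prop :=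
  ∀ e : Γ'.Edge, y ∈ (e : Sym2 V') ↔ ∃ L, SourceSummand φ x e L

/-! ### The cyclic lexicographic order -/

variable (Γ) in
/-- Lexicographic comparison `L < L'` of ordered sets of vertices from position `p` on.  The
vertices at position `p` lie on a common `A`-cycle, on which `g` is the greatest vertex, the
vertex with an arrow coming from `g` is less than `g`, the next one is even less, and so on.  If
the vertices at position `p` coincide, then at the next position their common value is the
greatest vertex, on the other `A`-cycle through it.  An empty spot is the least one at an even
position and the greatest one at an odd position. -/
def lexLt : ℕ → Γ.Dart → List Γ.Dart → List Γ.Dart → Prop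
  | _, _, [], [] => False
  | p, _, [], _ :: _ => Even p
  | p, _, _ :: _, [] => ¬ Even p
  | p, g, a :: L, b :: L' =>
      (a = b ∧ lexLt (p + 1) a.symm L L') ∨ (a ≠ b ∧ Γ.steps g b < Γ.steps g a)

end BrauerTree

/-- `b` follows `a` in the cyclic ordering, in descending direction, glued from the linear order
`lt`: either `b` is the greatest of the elements less than `a`, or `a` is the least element and
`b` is the greatest one. -/
def GluedNext {α : Type*} (lt : α → α → Prop) (a b : α) : Prop :=
  (lt b a ∧ ∀ c, lt c a → c = b ∨ lt c b) ∨
  ((∀ c, c = a ∨ lt a c) ∧ ∀ c, c = b ∨ lt c b)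

/-!
Sequences of marked vertices are non-backtracking walks in `Γ`, and each of them gives a two-term
complex of projective modules.  If `L'` is less than `L`, the arcs between the terms of their common
initial segment and of the first pair at which they differ form a chain map from the complex of `L`
to that of `L'`.  For a descending triple starting on the cycle of `x`, the composite of two such
maps is, on the first source, the path along this cycle from the first term of the greatest sequence
to that of the least one.  It is not null-homotopic: a homotopy would factor this path through
arrows of other cycles, which act by zero on the uniserial representation carried by the cycle of
`x`.

In the Brauer tree algebra of `Γ'`, a nonzero product of an element of `e₁Ae₂` and one of `e₂Ae₃`,
for three distinct edges at `y`, forces the three edges to occur in this order around `y`.  Hence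
every descending triple is met in its order when one goes around `y`, which leaves only the cyclic
ordering glued from the linear one.
-/

section Glued

variable {α : Type*} {lt : α → α → Prop} [IsStrictTotalOrder α lt]

theorem exists_greatest (lt : α → α → Prop) [IsStrictTotalOrder α lt] [Finite α] [Nonempty α] :
    ∃ m, ∀ c, c = m ∨ lt c m := by
  classical
  let _ := linearOrderOfSTO lt
  obtain ⟨m, hm⟩ := Finite.exists_max (id : α → α)
  exact ⟨m, fun c => (hm c).eq_or_lt⟩

theorem GluedNext.not_lt {a b c : α} (hb : GluedNext lt a b) (hc : GluedNext lt a c) :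
    ¬ lt b c := by
  have hirr : ∀ x, ¬ lt x x := irrefl_of lt
  have htrans : ∀ x y z, lt x y → lt y z → lt x z := fun _ _ _ => trans_of lt
  rcases hb with ⟨hba, hb⟩ | ⟨ha, hb⟩ <;> rcases hc with ⟨hca, -⟩ | ⟨ha', -⟩
  · grind [hb c hca]
  · grind [ha' b]
  · grind [ha c]
  · grind [hb c]

theorem GluedNext.unique {a b c : α} (hb : GluedNext lt a b) (hc : GluedNext lt a c) : b = c :=
  ((trichotomous_of lt b c).resolve_left (hb.not_lt hc)).resolve_right (hc.not_lt hb)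

end Glued

section Double

open HomologicalComplex

variable {C ι : Type*} [Category* C] [Preadditive C] [Limits.HasZeroObject C]
  {c : ComplexShape ι} {i₀ i₁ : ι} {X₀ X₁ Y₀ Y₁ Z₀ Z₁ : C} {f : X₀ ⟶ X₁} {f' : Y₀ ⟶ Y₁}
  {f'' : Z₀ ⟶ Z₁}

/-- The morphism of two-term complexes given by a commutative square. -/
noncomputable def doubleMap (hi : c.Rel i₀ i₁) (hne : i₀ ≠ i₁) (a : X₀ ⟶ Y₀) (b : X₁ ⟶ Y₁)
    (comm : a ≫ f' = f ≫ b) :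
    double f hi ⟶ double f' hi :=
  mkHomFromDouble hi hne
    (a ≫ (doubleXIso₀ f' hi).inv)
    (b ≫ (doubleXIso₁ f' hi hne).inv)
    (by rw [double_d f' hi hne, Category.assoc, Iso.inv_hom_id_assoc,
      reassoc_of% comm])
    (fun k _ => by
      rw [double_d_eq_zero₀ _ _ _ _ hne.symm, Limits.comp_zero])

variable {hi : c.Rel i₀ i₁} {hne : i₀ ≠ i₁}

theorem doubleMap_f₀ (a : X₀ ⟶ Y₀) (b : X₁ ⟶ Y₁) (comm : a ≫ f' = f ≫ b) :
    (doubleMap hi hne a b comm).f i₀ = (doubleXIso₀ f hi).hom ≫ a ≫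
      (doubleXIso₀ f' hi).inv :=
  mkHomFromDouble_f₀ _ _ _ _ _ _

theorem doubleMap_f₁ (a : X₀ ⟶ Y₀) (b : X₁ ⟶ Y₁) (comm : a ≫ f' = f ≫ b) :
    (doubleMap hi hne a b comm).f i₁ = (doubleXIso₁ f hi hne).hom ≫ b ≫
      (doubleXIso₁ f' hi hne).inv :=
  mkHomFromDouble_f₁ _ _ _ _ _ _

theorem doubleMap_comp_doubleMap {a : X₀ ⟶ Y₀} {b : X₁ ⟶ Y₁} (comm : a ≫ f' = f ≫ b)
    {a' : Y₀ ⟶ Z₀} {b' : Y₁ ⟶ Z₁} (comm' : a' ≫ f'' = f' ≫ b') :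
    doubleMap hi hne a b comm ≫ doubleMap hi hne a' b' comm' =
      doubleMap hi hne (a ≫ a') (b ≫ b')
        (by rw [Category.assoc, comm', reassoc_of% comm]) := by
  refine from_double_hom_ext ?_ ?_
  · simp only [comp_f, doubleMap_f₀, Category.assoc, Iso.inv_hom_id_assoc]
  · simp only [comp_f, doubleMap_f₁, Category.assoc, Iso.inv_hom_id_assoc]

theorem exists_eq_comp_of_quotient_map_doubleMap_eq_zero {a : X₀ ⟶ Y₀} {b : X₁ ⟶ Y₁}
    {comm : a ≫ f' = f ≫ b}
    (h : (HomotopyCategory.quotient C c).map (doubleMap hi hne a b comm) = 0) :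
    ∃ s : X₁ ⟶ Y₀, a = f ≫ s := by
  obtain ⟨H⟩ := (HomotopyCategory.quotient_map_eq_zero_iff _).1 h
  refine ⟨(doubleXIso₁ f hi hne).inv ≫ H.hom i₁ i₀ ≫
    (doubleXIso₀ f' hi).hom, ?_⟩
  have hcomm := H.comm i₀
  have hprev : prevD i₀ H.hom = 0 := by
    rw [prevD, AddMonoidHom.mk'_apply, double_d_eq_zero₁ f' hi _ _ hne,
      Limits.comp_zero]
  rw [dNext_eq H.hom hi, hprev, add_zero, zero_f, add_zero,
    double_d f hi hne, doubleMap_f₀] at hcomm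
  rw [← cancel_epi (doubleXIso₀ f hi).hom,
    ← cancel_mono (doubleXIso₀ f' hi).inv]
  simpa using hcomm

/-- A two-term complex whose second term is zero is a stalk complex. -/
noncomputable def doubleIsoSingle [DecidableEq ι] (f : X₀ ⟶ X₁) (hi : c.Rel i₀ i₁) (hne : i₀ ≠ i₁)
    (hX : Limits.IsZero X₁) (i : X₀ ≅ Y₀) :
    double f hi ≅ (single C c i₀).obj Y₀ where
  hom := mkHomToSingle
    ((doubleXIso₀ f hi).hom ≫ i.hom) fun k _ => by
      rw [double_d_eq_zero₁ f hi _ _ hne, Limits.zero_comp]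
  inv := mkHomFromSingle
    (i.inv ≫ (doubleXIso₀ f hi).inv) fun k hk => by
      obtain rfl := c.next_eq hi hk
      rw [double_d f hi hne, hX.eq_of_tgt f 0]
      simp
  hom_inv_id := by
    refine from_double_hom_ext ?_ ?_
    · simp
    · exact (hX.of_iso (doubleXIso₁ f hi hne)).eq_of_src _ _
  inv_hom_id := by
    apply from_single_hom_ext
    simp

end Double

namespace BrauerTree

/-! ### Half-edges and rotation -/

section Combinatorics

variable {V : Type v} {Γ : BrauerTree V}

instance : Finite Γ.Edge :=
  haveI := Γ.finite
  inferInstance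

instance : Finite Γ.Dart :=
  haveI := Γ.finite
  Finite.of_injective _ SimpleGraph.Dart.toProd_injective

theorem edge_symm (d : Γ.Dart) : Γ.edge d.symm = Γ.edge d :=
  Subtype.ext d.edge_symm

theorem edge_eq_iff {d d' : Γ.Dart} : Γ.edge d = Γ.edge d' ↔ d = d' ∨ d = d'.symm := by
  rw [← SimpleGraph.dart_edge_eq_iff, edge, edge, Subtype.mk.injEq]

theorem eq_of_edge_eq {d d' : Γ.Dart} (hfst : d.fst = d'.fst) (h : Γ.edge d = Γ.edge d') :
    d = d' :=
  (edge_eq_iff.1 h).resolve_right fun hd => d'.snd_ne_fst (by rw [hd] at hfst; exact hfst)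

theorem eq_and_eq_of_edge_eq {a b c d : Γ.Dart} (hab : a.fst = b.fst) (hcd : c.fst = d.fst)
    (hne : a ≠ b) (hca : Γ.edge c = Γ.edge a) (hdb : Γ.edge d = Γ.edge b) : c = a ∧ d = b := by
  rcases edge_eq_iff.1 hca with rfl | rfl
  · exact ⟨rfl, eq_of_edge_eq (hcd.symm.trans hab) hdb⟩
  · rcases edge_eq_iff.1 hdb with rfl | rfl
    · exact absurd (hab.trans hcd.symm) a.fst_ne_snd
    · exact absurd (SimpleGraph.Dart.ext _ _ (Prod.ext hab hcd)) hne

theorem exists_dart {x : V} {e : Γ.Edge} (h : x ∈ (e : Sym2 V)) :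
    ∃ d : Γ.Dart, d.fst = x ∧ Γ.edge d = e := by
  obtain ⟨z, hz⟩ := Sym2.mem_iff_exists.1 h
  have hadj : Γ.graph.Adj x z := by
    rw [← SimpleGraph.mem_edgeSet, ← hz]
    exact e.2
  exact ⟨⟨(x, z), hadj⟩, rfl, Subtype.ext hz.symm⟩

theorem fst_mem_edge (d : Γ.Dart) : d.fst ∈ (Γ.edge d : Sym2 V) :=
  Sym2.mem_mk_left _ _

theorem iterate_rot_fst (k : ℕ) (d : Γ.Dart) : (Γ.rot^[k] d).fst = d.fst := by
  induction k with
  | zero => rfl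
  | succ k ih => rw [Function.iterate_succ_apply', Γ.rot_fst, ih]

theorem exists_iterate_rot {d d' : Γ.Dart} (h : d.fst = d'.fst) : ∃ k, Γ.rot^[k] d = d' := by
  obtain ⟨k, hk⟩ := (Γ.rot_sameCycle d d' h).exists_nat_pow_eq
  exact ⟨k, by rw [← hk, Equiv.Perm.iterate_eq_pow]⟩

theorem iterate_steps {d d' : Γ.Dart} (h : d.fst = d'.fst) : Γ.rot^[Γ.steps d d'] d = d' :=
  Nat.sInf_mem (s := {k : ℕ | Γ.rot^[k] d = d'}) (exists_iterate_rot h)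

theorem minimalPeriod_rot_pos (d : Γ.Dart) : 0 < Function.minimalPeriod Γ.rot d :=
  Function.minimalPeriod_pos_of_mem_periodicPts (Γ.rot.injective.mem_periodicPts d)

theorem minimalPeriod_rot (d : Γ.Dart) :
    Function.minimalPeriod Γ.rot d = Γ.valency d.fst := by
  have hbij : Set.BijOn (fun k => (Γ.rot^[k] d).snd)
      (Set.Iio (Function.minimalPeriod Γ.rot d)) (Γ.graph.neighborSet d.fst) := by
    refine ⟨fun k _ => ?_, fun k hk l hl hkl => ?_, fun z hz => ?_⟩
    · have := (Γ.rot^[k] d).adj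
      rwa [iterate_rot_fst] at this
    · refine Function.iterate_injOn_Iio_minimalPeriod hk hl
        (SimpleGraph.Dart.ext _ _ (Prod.ext ?_ hkl))
      exact (iterate_rot_fst k d).trans (iterate_rot_fst l d).symm
    · obtain ⟨k, hk⟩ := exists_iterate_rot (d := d) (d' := ⟨(d.fst, z), hz⟩) rfl
      refine ⟨k % Function.minimalPeriod Γ.rot d, Nat.mod_lt _ (minimalPeriod_rot_pos d), ?_⟩
      simp only [Function.iterate_mod_minimalPeriod_eq, hk]
  have hcard := hbij.injOn.ncard_image
  rw [hbij.image_eq, ← Finset.coe_Iio, Set.ncard_coe_finset, Nat.card_Iio] at hcard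
  exact hcard.symm

theorem valency_pos (d : Γ.Dart) : 0 < Γ.valency d.fst :=
  minimalPeriod_rot d ▸ minimalPeriod_rot_pos d

theorem iterate_valency (d : Γ.Dart) : Γ.rot^[Γ.valency d.fst] d = d :=
  minimalPeriod_rot d ▸ Function.iterate_minimalPeriod

theorem steps_lt_valency {d d' : Γ.Dart} (h : d.fst = d'.fst) :
    Γ.steps d d' < Γ.valency d.fst := by
  obtain ⟨k, hk⟩ := exists_iterate_rot h
  have hmod : k % Γ.valency d.fst ∈ {k : ℕ | Γ.rot^[k] d = d'} := by
    change Γ.rot^[k % Γ.valency d.fst] d = d'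
    rw [← minimalPeriod_rot, Function.iterate_mod_minimalPeriod_eq, hk]
  exact (Nat.sInf_le hmod).trans_lt (Nat.mod_lt _ (valency_pos d))

theorem steps_eq_of_lt {d d' : Γ.Dart} {k : ℕ} (h : Γ.rot^[k] d = d')
    (hk : k < Γ.valency d.fst) : Γ.steps d d' = k := by
  subst h
  have hfst : d.fst = (Γ.rot^[k] d).fst := (iterate_rot_fst k d).symm
  have hlt := steps_lt_valency hfst
  rw [← minimalPeriod_rot] at hk hlt
  exact Function.iterate_injOn_Iio_minimalPeriod hlt hk (iterate_steps hfst)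

theorem steps_self (d : Γ.Dart) : Γ.steps d d = 0 :=
  steps_eq_of_lt rfl (valency_pos d)

theorem steps_pos {d d' : Γ.Dart} (h : d.fst = d'.fst) (hne : d ≠ d') : 0 < Γ.steps d d' := by
  refine Nat.pos_of_ne_zero fun h0 => hne ?_
  rw [← iterate_steps h, h0, Function.iterate_zero_apply]

theorem steps_right_injective {g a b : Γ.Dart} (ha : g.fst = a.fst) (hb : g.fst = b.fst)
    (h : Γ.steps g a = Γ.steps g b) : a = b := by
  rw [← iterate_steps ha, h, iterate_steps hb]

theorem steps_add_of_le {g a b : Γ.Dart} (ha : g.fst = a.fst) (hb : g.fst = b.fst)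
    (h : Γ.steps g a ≤ Γ.steps g b) : Γ.steps g a + Γ.steps a b = Γ.steps g b := by
  suffices Γ.steps a b = Γ.steps g b - Γ.steps g a by omega
  refine steps_eq_of_lt ?_ (by have := steps_lt_valency hb; rw [← ha]; omega)
  calc Γ.rot^[Γ.steps g b - Γ.steps g a] a
    _ = Γ.rot^[Γ.steps g b - Γ.steps g a] (Γ.rot^[Γ.steps g a] g) := by rw [iterate_steps ha]
    _ = b := by rw [← Function.iterate_add_apply, Nat.sub_add_cancel h, iterate_steps hb]

theorem steps_add_steps_swap {a b : Γ.Dart} (h : a.fst = b.fst) (hne : a ≠ b) :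
    Γ.steps a b + Γ.steps b a = Γ.valency a.fst := by
  have hlt := steps_lt_valency h
  have hpos := steps_pos h hne
  suffices Γ.steps b a = Γ.valency a.fst - Γ.steps a b by omega
  refine steps_eq_of_lt ?_ (by rw [← h]; omega)
  calc Γ.rot^[Γ.valency a.fst - Γ.steps a b] b
    _ = Γ.rot^[Γ.valency a.fst - Γ.steps a b] (Γ.rot^[Γ.steps a b] a) := by rw [iterate_steps h]
    _ = a := by rw [← Function.iterate_add_apply, Nat.sub_add_cancel hlt.le, iterate_valency]

theorem steps_add_to_start {g a b : Γ.Dart} (ha : g.fst = a.fst) (hb : g.fst = b.fst)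
    (hag : a ≠ g) (hbg : b ≠ g) (h : Γ.steps g a ≤ Γ.steps g b) :
    Γ.steps a b + Γ.steps b g = Γ.steps a g := by
  have hadd := steps_add_of_le ha hb h
  have hswap_a := steps_add_steps_swap ha hag.symm
  have hswap_b := steps_add_steps_swap hb hbg.symm
  omega

end Combinatorics

section Rotation

variable {V : Type v} {Γ : BrauerTree V} {y : V}

variable (Γ) in
/-- The edges incident to a vertex, that is, the edges passed by the cycle of that vertex. -/
abbrev EdgeAt (y : V) : Type v := {e : Γ.Edge // y ∈ (e : Sym2 V)}

/-- The half-edge at `y` of an edge incident to `y`. -/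
noncomputable def dartAt (e : Γ.EdgeAt y) : Γ.Dart := (exists_dart e.2).choose

theorem dartAt_fst (e : Γ.EdgeAt y) : (dartAt e).fst = y := (exists_dart e.2).choose_spec.1

theorem edge_dartAt (e : Γ.EdgeAt y) : Γ.edge (dartAt e) = e.1 :=
  (exists_dart e.2).choose_spec.2

theorem dartAt_fst_eq (e f : Γ.EdgeAt y) : (dartAt e).fst = (dartAt f).fst :=
  (dartAt_fst e).trans (dartAt_fst f).symm

theorem dartAt_injective : Function.Injective (dartAt : Γ.EdgeAt y → Γ.Dart) := fun e f h =>
  Subtype.ext (by rw [← edge_dartAt, h, edge_dartAt])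

theorem eq_dartAt {d : Γ.Dart} {e : Γ.EdgeAt y} (hd : d.fst = y) (h : Γ.edge d = e.1) :
    d = dartAt e :=
  eq_of_edge_eq (hd.trans (dartAt_fst e).symm) (h.trans (edge_dartAt e).symm)

theorem exists_dartAt_eq {d : Γ.Dart} (hd : d.fst = y) : ∃ e : Γ.EdgeAt y, dartAt e = d := by
  subst hd
  exact ⟨⟨Γ.edge d, fst_mem_edge d⟩, (eq_dartAt rfl rfl).symm⟩

theorem exists_rot_iff {e f : Γ.EdgeAt y} :
    (∃ d : Γ.Dart, d.fst = y ∧ Γ.edge d = e.1 ∧ Γ.edge (Γ.rot d) = f.1) ↔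
      Γ.rot (dartAt e) = dartAt f := by
  refine ⟨?_, fun h => ⟨dartAt e, dartAt_fst e, edge_dartAt e, by rw [h, edge_dartAt]⟩⟩
  rintro ⟨d, hd, hde, hdf⟩
  rw [← eq_dartAt hd hde]
  exact eq_dartAt ((Γ.rot_fst d).trans hd) hdf

theorem gluedNext_steps_of_rot {e f m : Γ.EdgeAt y} (h : Γ.rot (dartAt e) = dartAt f) :
    GluedNext (fun a b => Γ.steps (dartAt m) (dartAt b) < Γ.steps (dartAt m) (dartAt a)) e f := by
  have hinj {a b : Γ.EdgeAt y} (hab : Γ.steps (dartAt m) (dartAt a) =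
      Γ.steps (dartAt m) (dartAt b)) : a = b :=
    dartAt_injective (steps_right_injective (dartAt_fst_eq m a) (dartAt_fst_eq m b) hab)
  have hlt (c : Γ.EdgeAt y) := steps_lt_valency (dartAt_fst_eq m c)
  have hrot : Γ.rot^[Γ.steps (dartAt m) (dartAt e) + 1] (dartAt m) = dartAt f := by
    rw [Function.iterate_succ_apply', iterate_steps (dartAt_fst_eq m e), h]
  simp only [GluedNext]
  rcases (Nat.succ_le_of_lt (hlt e)).lt_or_eq with hnext | hlast
  · have hf := steps_eq_of_lt hrot hnext
    refine Or.inl ⟨by omega, fun c hc => ?_⟩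
    exact (Nat.succ_le_of_lt hc).eq_or_lt.imp (fun h => hinj (h.symm.trans hf.symm)) hf.trans_lt
  · obtain rfl : m = f := dartAt_injective (by rw [← hrot, ← Nat.succ_eq_add_one, hlast,
      iterate_valency])
    refine Or.inr ⟨fun c => ?_, fun c => ?_⟩
    · exact (Nat.le_of_lt_succ ((hlt c).trans_eq hlast.symm)).eq_or_lt.imp_left hinj
    · rw [steps_self]
      exact (Nat.eq_zero_or_pos _).imp_left fun h0 => hinj (h0.trans (steps_self _).symm)

variable {lt : Γ.EdgeAt y → Γ.EdgeAt y → Prop} [IsStrictTotalOrder _ lt]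

theorem lt_iff_steps_lt_steps {m : Γ.EdgeAt y} (hm : ∀ c, c = m ∨ lt c m)
    (hlt : ∀ a b c, lt b a → lt c b → Γ.steps (dartAt a) (dartAt b) +
      Γ.steps (dartAt b) (dartAt c) = Γ.steps (dartAt a) (dartAt c)) (a b : Γ.EdgeAt y) :
    lt a b ↔ Γ.steps (dartAt m) (dartAt b) < Γ.steps (dartAt m) (dartAt a) := by
  have hpos {a b : Γ.EdgeAt y} (hab : lt b a) : 0 < Γ.steps (dartAt a) (dartAt b) :=
    steps_pos (dartAt_fst_eq a b) (dartAt_injective.ne (ne_of_irrefl' hab))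
  have himp {a b : Γ.EdgeAt y} (hab : lt a b) :
      Γ.steps (dartAt m) (dartAt b) < Γ.steps (dartAt m) (dartAt a) := by
    rcases hm b with rfl | hb
    · rw [steps_self]
      exact hpos hab
    · have := hlt m b a hb hab
      have := hpos hab
      omega
  refine ⟨himp, fun h => ?_⟩
  rcases trichotomous_of lt a b with hab | rfl | hba
  · exact hab
  · exact absurd h (lt_irrefl _)
  · exact absurd h (himp hba).not_gt

theorem rot_iff_gluedNext
    (hlt : ∀ a b c, lt b a → lt c b → Γ.steps (dartAt a) (dartAt b) +
      Γ.steps (dartAt b) (dartAt c) = Γ.steps (dartAt a) (dartAt c)) (e f : Γ.EdgeAt y) :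
    (∃ d : Γ.Dart, d.fst = y ∧ Γ.edge d = e.1 ∧ Γ.edge (Γ.rot d) = f.1) ↔
      GluedNext lt e f := by
  have : Nonempty (Γ.EdgeAt y) := ⟨e⟩
  obtain ⟨m, hm⟩ := exists_greatest lt
  have hnext {e f : Γ.EdgeAt y} (h : Γ.rot (dartAt e) = dartAt f) : GluedNext lt e f := by
    simpa only [← lt_iff_steps_lt_steps hm hlt] using gluedNext_steps_of_rot (m := m) h
  refine exists_rot_iff.trans ⟨hnext, fun h => ?_⟩
  obtain ⟨f', hf'⟩ := exists_dartAt_eq ((Γ.rot_fst (dartAt e)).trans (dartAt_fst e))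
  rw [h.unique (hnext hf'.symm), hf']

end Rotation

/-! ### Paths in the Brauer tree algebra -/

section Algebra

variable {V : Type v} {Γ : BrauerTree V} {K : Type u} [Field K]

variable (Γ K) in
/-- The element of the Brauer tree algebra given by the path of `k` arrows of one cycle which
starts with the arrow of `d`. -/
noncomputable def path (d : Γ.Dart) (k : ℕ) : Γ.Alg K := Γ.ofFree K (Γ.freePath K d k)

variable (Γ K) in
/-- The element of the Brauer tree algebra given by the arrow of a half-edge. -/
noncomputable def arrow (d : Γ.Dart) : Γ.Alg K := Γ.ofFree K (FreeAlgebra.ι K (Gen.arrow d))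

theorem ofFree_eq {a b : FreeAlgebra K Γ.Gen} (h : Γ.Rel K a b) :
    Γ.ofFree K a = Γ.ofFree K b :=
  RingQuot.mkAlgHom_rel K h

theorem ofFree_surjective : Function.Surjective (Γ.ofFree K) :=
  RingQuot.mkAlgHom_surjective K (Γ.Rel K)

theorem idem_mul_self (e : Γ.Edge) : Γ.idem K e * Γ.idem K e = Γ.idem K e := by
  simpa [idem] using ofFree_eq (Rel.idem_mul_self (K := K) e)

theorem idem_mul_idem {e f : Γ.Edge} (h : e ≠ f) : Γ.idem K e * Γ.idem K f = 0 := by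
  simpa [idem] using ofFree_eq (Rel.idem_mul_idem (K := K) e f h)

theorem sum_idem [Fintype Γ.Edge] : ∑ e : Γ.Edge, Γ.idem K e = 1 := by
  simpa [idem, finsum_eq_sum_of_fintype] using ofFree_eq (Rel.sum_idem (Γ := Γ) (K := K))

theorem idem_mul_arrow (d : Γ.Dart) : Γ.idem K (Γ.edge d) * Γ.arrow K d = Γ.arrow K d := by
  simpa [idem, arrow] using ofFree_eq (Rel.source (K := K) d)

theorem arrow_mul_idem (d : Γ.Dart) :
    Γ.arrow K d * Γ.idem K (Γ.edge (Γ.rot d)) = Γ.arrow K d := by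
  simpa [idem, arrow] using ofFree_eq (Rel.target (K := K) d)

theorem arrow_mul_arrow_symm (d : Γ.Dart) : Γ.arrow K d * Γ.arrow K (Γ.rot d).symm = 0 := by
  simpa [arrow] using ofFree_eq (Rel.change_cycle (K := K) d)

theorem path_valency (d : Γ.Dart) :
    Γ.path K d (Γ.valency d.fst) = Γ.path K d.symm (Γ.valency d.snd) :=
  ofFree_eq (Rel.full_cycle (K := K) d)

theorem path_zero (d : Γ.Dart) : Γ.path K d 0 = Γ.idem K (Γ.edge d) := rfl

theorem path_succ (d : Γ.Dart) (k : ℕ) :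
    Γ.path K d (k + 1) = Γ.arrow K d * Γ.path K (Γ.rot d) k := by
  simp [path, arrow, freePath]

theorem path_one (d : Γ.Dart) : Γ.path K d 1 = Γ.arrow K d := by
  rw [path_succ, path_zero, arrow_mul_idem]

theorem idem_mul_path (d : Γ.Dart) (k : ℕ) :
    Γ.idem K (Γ.edge d) * Γ.path K d k = Γ.path K d k := by
  cases k with
  | zero => rw [path_zero, idem_mul_self]
  | succ k => rw [path_succ, ← mul_assoc, idem_mul_arrow]

theorem path_mul_path (d : Γ.Dart) (k l : ℕ) :
    Γ.path K d k * Γ.path K (Γ.rot^[k] d) l = Γ.path K d (k + l) := by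
  induction k generalizing d with
  | zero => rw [path_zero, zero_add]; exact idem_mul_path d l
  | succ k ih =>
    rw [path_succ, mul_assoc, Function.iterate_succ_apply, ih, Nat.add_right_comm, path_succ]

theorem path_mul_idem (d : Γ.Dart) (k : ℕ) :
    Γ.path K d k * Γ.idem K (Γ.edge (Γ.rot^[k] d)) = Γ.path K d k :=
  path_mul_path d k 0

theorem path_mul_path_symm {d d' : Γ.Dart} {k l : ℕ} (h : d' = (Γ.rot^[k] d).symm)
    (hk : 0 < k) (hl : 0 < l) : Γ.path K d k * Γ.path K d' l = 0 := by
  obtain ⟨k, rfl⟩ := Nat.exists_eq_add_one.2 hk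
  obtain ⟨l, rfl⟩ := Nat.exists_eq_add_one.2 hl
  rw [Function.iterate_succ_apply'] at h
  calc Γ.path K d (k + 1) * Γ.path K d' (l + 1)
    _ = Γ.path K d k * Γ.arrow K (Γ.rot^[k] d) * (Γ.arrow K d' * Γ.path K (Γ.rot d') l) := by
      rw [← path_mul_path, path_one, path_succ]
    _ = Γ.path K d k * (Γ.arrow K (Γ.rot^[k] d) * Γ.arrow K d') * Γ.path K (Γ.rot d') l := by
      simp only [mul_assoc]
    _ = 0 := by rw [h, arrow_mul_arrow_symm, mul_zero, zero_mul]

theorem path_eq_zero {d : Γ.Dart} {k : ℕ} (hk : Γ.valency d.fst < k) : Γ.path K d k = 0 := by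
  obtain ⟨l, rfl⟩ := Nat.exists_eq_add_of_lt hk
  have hfull : (Γ.rot^[Γ.valency d.snd] d.symm) = d.symm := iterate_valency d.symm
  calc Γ.path K d (Γ.valency d.fst + l + 1)
    _ = Γ.path K d.symm (Γ.valency d.snd) * Γ.path K d (l + 1) := by
      have := path_mul_path (K := K) d (Γ.valency d.fst) (l + 1)
      rwa [iterate_valency, path_valency, ← add_assoc, eq_comm] at this
    _ = 0 := path_mul_path_symm (by rw [hfull, SimpleGraph.Dart.symm_symm])
      (valency_pos d.symm) l.succ_pos

theorem arc_eq_path (d d' : Γ.Dart) : Γ.arc K d d' = Γ.path K d (Γ.steps d d') := rfl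

theorem arc_self (d : Γ.Dart) : Γ.arc K d d = Γ.idem K (Γ.edge d) := by
  rw [arc_eq_path, steps_self, path_zero]

theorem idem_mul_arc (d d' : Γ.Dart) : Γ.idem K (Γ.edge d) * Γ.arc K d d' = Γ.arc K d d' :=
  idem_mul_path d _

theorem arc_mul_path {a b : Γ.Dart} (hab : a.fst = b.fst) (k : ℕ) :
    Γ.arc K a b * Γ.path K b k = Γ.path K a (Γ.steps a b + k) := by
  rw [arc_eq_path]
  have := path_mul_path (K := K) a (Γ.steps a b) k
  rwa [iterate_steps hab] at this

theorem arc_mul_idem {a b : Γ.Dart} (hab : a.fst = b.fst) :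
    Γ.arc K a b * Γ.idem K (Γ.edge b) = Γ.arc K a b :=
  arc_mul_path hab 0

theorem arc_mul_arc {a b c : Γ.Dart} (hab : a.fst = b.fst)
    (h : Γ.steps a b + Γ.steps b c = Γ.steps a c) :
    Γ.arc K a b * Γ.arc K b c = Γ.arc K a c := by
  rw [arc_eq_path b, arc_mul_path hab, h, arc_eq_path]

theorem arc_mul_arc_symm {a b c : Γ.Dart} (hab : a.fst = b.fst) (hbc : b.snd = c.fst)
    (hne : a ≠ b) (hne' : b.symm ≠ c) : Γ.arc K a b * Γ.arc K b.symm c = 0 :=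
  path_mul_path_symm (by rw [iterate_steps hab]) (steps_pos hab hne)
    (steps_pos (d := b.symm) hbc hne')

/-! ### Spanning by paths -/

theorem idem_mul_path_mem (e : Γ.Edge) (d : Γ.Dart) (k : ℕ) :
    Γ.idem K e * Γ.path K d k ∈ Submodule.span K (Set.range (Function.uncurry (Γ.path K))) := by
  by_cases h : e = Γ.edge d
  · rw [h, idem_mul_path]
    exact Submodule.subset_span ⟨(d, k), rfl⟩
  · rw [← idem_mul_path, ← mul_assoc, idem_mul_idem h, zero_mul]
    exact zero_mem _

theorem arrow_mul_path_mem (d d' : Γ.Dart) (k : ℕ) :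
    Γ.arrow K d * Γ.path K d' k ∈
      Submodule.span K (Set.range (Function.uncurry (Γ.path K))) := by
  by_cases hedge : Γ.edge (Γ.rot d) = Γ.edge d'
  · rcases edge_eq_iff.1 hedge with rfl | hsymm
    · rw [← path_succ]
      exact Submodule.subset_span ⟨(d, k + 1), rfl⟩
    · cases k with
      | zero =>
        rw [path_zero, ← hedge, arrow_mul_idem, ← path_one]
        exact Submodule.subset_span ⟨(d, 1), rfl⟩
      | succ k =>
        rw [path_succ, ← mul_assoc, ← d'.symm_symm, ← hsymm, arrow_mul_arrow_symm, zero_mul]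
        exact zero_mem _
  · rw [← arrow_mul_idem, mul_assoc, ← idem_mul_path d', ← mul_assoc (Γ.idem K _),
      idem_mul_idem hedge, zero_mul, mul_zero]
    exact zero_mem _

theorem span_path : Submodule.span K (Set.range (Function.uncurry (Γ.path K))) = ⊤ := by
  set S := Submodule.span K (Set.range (Function.uncurry (Γ.path K))) with hS
  have hgen (q : Γ.Gen) : S ≤ S.comap (LinearMap.mulLeft K (Γ.ofFree K (FreeAlgebra.ι K q))) := by
    rw [hS, Submodule.span_le]
    rintro _ ⟨⟨d, k⟩, rfl⟩
    cases q with
    | idem e => exact idem_mul_path_mem e d k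
    | arrow d' => exact arrow_mul_path_mem d' d k
  have hmul (a : FreeAlgebra K Γ.Gen) : ∀ s ∈ S, Γ.ofFree K a * s ∈ S := by
    induction a using FreeAlgebra.induction with
    | grade0 r =>
      intro s hs
      rw [AlgHom.commutes, ← Algebra.smul_def]
      exact S.smul_mem r hs
    | grade1 q => exact fun s hs => hgen q hs
    | mul a b ha hb =>
      intro s hs
      rw [map_mul, mul_assoc]
      exact ha _ (hb s hs)
    | add a b ha hb =>
      intro s hs
      rw [map_add, add_mul]
      exact S.add_mem (ha s hs) (hb s hs)
  have hone : (1 : Γ.Alg K) ∈ S := by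
    have := Fintype.ofFinite Γ.Edge
    rw [← sum_idem]
    refine S.sum_mem fun e _ => ?_
    obtain ⟨d, -, rfl⟩ := exists_dart (Sym2.out_fst_mem (e : Sym2 V))
    exact Submodule.subset_span ⟨(d, 0), rfl⟩
  refine eq_top_iff.2 fun a _ => ?_
  obtain ⟨b, rfl⟩ := ofFree_surjective a
  simpa using hmul b 1 hone

theorem idem_mul_path_mul_idem_mem {a b : Γ.Dart} (hab : a.fst = b.fst) (hne : a ≠ b)
    (d : Γ.Dart) (k : ℕ) :
    Γ.idem K (Γ.edge a) * Γ.path K d k * Γ.idem K (Γ.edge b) ∈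
      Submodule.span K {Γ.arc K a b} := by
  by_cases hda : Γ.edge d = Γ.edge a
  swap
  · rw [← idem_mul_path, ← mul_assoc, idem_mul_idem (Ne.symm hda), zero_mul, zero_mul]
    exact zero_mem _
  by_cases hkb : Γ.edge (Γ.rot^[k] d) = Γ.edge b
  swap
  · rw [← path_mul_idem, mul_assoc, mul_assoc, idem_mul_idem hkb, mul_zero, mul_zero]
    exact zero_mem _
  rw [← hda, idem_mul_path, ← hkb, path_mul_idem]
  obtain ⟨rfl, hrot⟩ := eq_and_eq_of_edge_eq hab (iterate_rot_fst k d).symm hne hda hkb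
  rcases lt_trichotomy k (Γ.valency d.fst) with hlt | rfl | hgt
  · rw [arc_eq_path, steps_eq_of_lt hrot hlt]
    exact Submodule.mem_span_singleton_self _
  · exact absurd ((iterate_valency d).symm.trans hrot) hne
  · rw [path_eq_zero hgt]
    exact zero_mem _

theorem exists_idem_mul_mul_idem_eq_smul {a b : Γ.Dart} (hab : a.fst = b.fst) (hne : a ≠ b)
    (s : Γ.Alg K) : ∃ r : K, Γ.idem K (Γ.edge a) * s * Γ.idem K (Γ.edge b) = r • Γ.arc K a b := by
  have hle : ⊤ ≤ (Submodule.span K {Γ.arc K a b}).comap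
      (LinearMap.mulLeftRight K (Γ.idem K (Γ.edge a), Γ.idem K (Γ.edge b))) := by
    rw [← span_path, Submodule.span_le]
    rintro _ ⟨⟨d, k⟩, rfl⟩
    exact idem_mul_path_mul_idem_mem hab hne d k
  obtain ⟨r, hr⟩ := Submodule.mem_span_singleton.1 (hle (Submodule.mem_top (x := s)))
  exact ⟨r, hr.symm⟩

theorem exists_mul_eq_smul_path {a b c : Γ.Dart} (hab : a.fst = b.fst) (hbc : b.fst = c.fst)
    (hne : a ≠ b) (hne' : b ≠ c) (s t : Γ.Alg K) :
    ∃ r : K, (Γ.idem K (Γ.edge a) * s * Γ.idem K (Γ.edge b)) *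
      (Γ.idem K (Γ.edge b) * t * Γ.idem K (Γ.edge c)) =
        r • Γ.path K a (Γ.steps a b + Γ.steps b c) := by
  obtain ⟨r, hr⟩ := exists_idem_mul_mul_idem_eq_smul hab hne s
  obtain ⟨r', hr'⟩ := exists_idem_mul_mul_idem_eq_smul hbc hne' t
  exact ⟨r * r', by rw [hr, hr', smul_mul_smul_comm, arc_eq_path b, arc_mul_path hab]⟩

theorem steps_add_of_mul_ne_zero {a b c : Γ.Dart} (hab : a.fst = b.fst) (hbc : b.fst = c.fst)
    (hne : a ≠ b) (hne' : b ≠ c) (hac : a ≠ c) {s t : Γ.Alg K}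
    (h : (Γ.idem K (Γ.edge a) * s * Γ.idem K (Γ.edge b)) *
      (Γ.idem K (Γ.edge b) * t * Γ.idem K (Γ.edge c)) ≠ 0) :
    Γ.steps a b + Γ.steps b c = Γ.steps a c := by
  obtain ⟨r, hr⟩ := exists_mul_eq_smul_path hab hbc hne hne' s t
  have hrot : Γ.rot^[Γ.steps a b + Γ.steps b c] a = c := by
    rw [add_comm, Function.iterate_add_apply, iterate_steps hab, iterate_steps hbc]
  rcases lt_trichotomy (Γ.steps a b + Γ.steps b c) (Γ.valency a.fst) with hlt | heq | hgt
  · exact (steps_eq_of_lt hrot hlt).symm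
  · exact absurd ((iterate_valency a).symm.trans (heq ▸ hrot)) hac
  · exact absurd (by rw [hr, path_eq_zero hgt, smul_zero]) h

/-! ### Thin representations -/

section Thin

variable [Fintype Γ.Edge] [DecidableEq Γ.Edge]

variable (Γ) in
/-- The representation of the Brauer quiver which is one-dimensional at each vertex and in which
the arrow of `d` acts by the scalar `c d`, as a representation of the free algebra on the vertices
and arrows. -/
noncomputable def thinRep (c : Γ.Dart → K) : FreeAlgebra K Γ.Gen →ₐ[K] Matrix Γ.Edge Γ.Edge K :=
  FreeAlgebra.lift K (Gen.rec (fun e => Matrix.single e e 1)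
    fun d => Matrix.single (Γ.edge d) (Γ.edge (Γ.rot d)) (c d))

theorem thinRep_idem (c : Γ.Dart → K) (e : Γ.Edge) :
    Γ.thinRep c (FreeAlgebra.ι K (Gen.idem e)) = Matrix.single e e 1 := by
  simp [thinRep]

theorem thinRep_arrow (c : Γ.Dart → K) (d : Γ.Dart) :
    Γ.thinRep c (FreeAlgebra.ι K (Gen.arrow d)) =
      Matrix.single (Γ.edge d) (Γ.edge (Γ.rot d)) (c d) := by
  simp [thinRep]

theorem thinRep_freePath (c : Γ.Dart → K) (d : Γ.Dart) (k : ℕ) :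
    Γ.thinRep c (Γ.freePath K d k) =
      Matrix.single (Γ.edge d) (Γ.edge (Γ.rot^[k] d)) (∏ i ∈ Finset.range k, c (Γ.rot^[i] d)) := by
  induction k generalizing d with
  | zero => simp [freePath, thinRep_idem]
  | succ k ih =>
    rw [freePath, map_mul, thinRep_arrow, ih, Matrix.single_mul_single_same,
      Finset.prod_range_succ', mul_comm]
    simp only [Function.iterate_succ_apply, Function.iterate_zero_apply]

theorem exists_rep_path {c : Γ.Dart → K} (hchange : ∀ d, c d * c (Γ.rot d).symm = 0)
    (hcycle : ∀ d : Γ.Dart, ∃ d' : Γ.Dart, d'.fst = d.fst ∧ c d' = 0) :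
    ∃ ρ : Γ.Alg K →ₐ[K] Matrix Γ.Edge Γ.Edge K, ∀ d k, ρ (Γ.path K d k) =
      Matrix.single (Γ.edge d) (Γ.edge (Γ.rot^[k] d)) (∏ i ∈ Finset.range k, c (Γ.rot^[i] d)) := by
  have hfull (d : Γ.Dart) : Γ.thinRep c (Γ.freePath K d (Γ.valency d.fst)) = 0 := by
    obtain ⟨d', hd', hzero⟩ := hcycle d
    rw [thinRep_freePath, Finset.prod_eq_zero (Finset.mem_range.2 (steps_lt_valency hd'.symm))
      (by rw [iterate_steps hd'.symm, hzero]), Matrix.single_zero]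
  have hrel : ∀ ⦃a b⦄, Γ.Rel K a b → Γ.thinRep c a = Γ.thinRep c b := by
    intro a b hab
    cases hab with
    | idem_mul_self e => simp [thinRep_idem]
    | idem_mul_idem e f h => simp [thinRep_idem, h]
    | sum_idem => simp [finsum_eq_sum_of_fintype, thinRep_idem, Matrix.sum_single_one]
    | source d => simp [thinRep_idem, thinRep_arrow]
    | target d => simp [thinRep_idem, thinRep_arrow]
    | change_cycle d =>
      rw [map_mul, thinRep_arrow, thinRep_arrow, edge_symm, Matrix.single_mul_single_same,
        hchange, Matrix.single_zero, map_zero]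
    | full_cycle d => exact (hfull d).trans (hfull d.symm).symm
  exact ⟨RingQuot.liftAlgHom K ⟨Γ.thinRep c, hrel⟩, fun d k =>
    (RingQuot.liftAlgHom_mkAlgHom_apply K _ _ _).trans (thinRep_freePath c d k)⟩

end Thin

open scoped Classical in
theorem path_ne_path_symm_mul {d : Γ.Dart} {k l : ℕ} (hk : k < Γ.valency d.fst) (hl : 0 < l)
    (s : Γ.Alg K) : Γ.path K d k ≠ Γ.path K d.symm l * s := by
  -- The uniserial representation on the cycle of `d`, cut open just before `d`.
  let c : Γ.Dart → K := fun b => if b.fst = d.fst ∧ Γ.rot b ≠ d then 1 else 0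
  have hc {b : Γ.Dart} (hb : b.fst ≠ d.fst) : c b = 0 := if_neg fun h => hb h.1
  have hchange (b : Γ.Dart) : c b * c (Γ.rot b).symm = 0 := by
    by_cases hb : b.fst = d.fst
    · refine mul_eq_zero_of_right _ (hc ?_)
      rw [← hb, ← Γ.rot_fst b]
      exact (Γ.rot b).snd_ne_fst
    · exact mul_eq_zero_of_left (hc hb) _
  have hcycle (b : Γ.Dart) : ∃ b' : Γ.Dart, b'.fst = b.fst ∧ c b' = 0 := by
    by_cases hb : b.fst = d.fst
    · refine ⟨Γ.rot.symm d, ?_, if_neg fun h => h.2 (Γ.rot.apply_symm_apply d)⟩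
      rw [← Γ.rot_fst, Γ.rot.apply_symm_apply, hb]
    · exact ⟨b, rfl, hc hb⟩
  have := Fintype.ofFinite Γ.Edge
  obtain ⟨ρ, hρ⟩ := exists_rep_path hchange hcycle
  have hzero : ρ (Γ.path K d.symm l) = 0 := by
    rw [hρ, Finset.prod_eq_zero (Finset.mem_range.2 hl) (hc d.snd_ne_fst), Matrix.single_zero]
  have hone : ∏ i ∈ Finset.range k, c (Γ.rot^[i] d) = 1 := by
    refine Finset.prod_eq_one fun i hi => if_pos ⟨iterate_rot_fst i d, fun hrot => ?_⟩
    rw [← Function.iterate_succ_apply' Γ.rot] at hrot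
    have := steps_eq_of_lt hrot ((Nat.succ_le_of_lt (Finset.mem_range.1 hi)).trans_lt hk)
    exact Nat.succ_ne_zero i (this.symm.trans (steps_self d))
  intro h
  have hpath := congrArg ρ h
  rw [map_mul, hzero, zero_mul, hρ, hone] at hpath
  simpa using congrFun₂ hpath (Γ.edge d) (Γ.edge (Γ.rot^[k] d))

theorem idem_ne_zero (e : Γ.Edge) : Γ.idem K e ≠ 0 := by
  obtain ⟨d, -, rfl⟩ := exists_dart (Sym2.out_fst_mem (e : Sym2 V))
  have := path_ne_path_symm_mul (K := K) (valency_pos d) one_pos 0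
  rwa [mul_zero] at this

theorem idem_ne_mul {a b : Γ.Dart} (hab : a.fst = b.fst) (hne : a ≠ b) (s t : Γ.Alg K) :
    Γ.idem K (Γ.edge a) ≠ (Γ.idem K (Γ.edge a) * s * Γ.idem K (Γ.edge b)) *
      (Γ.idem K (Γ.edge b) * t * Γ.idem K (Γ.edge a)) := by
  obtain ⟨r, hr⟩ := exists_mul_eq_smul_path hab hab.symm hne hne.symm s t
  rw [steps_add_steps_swap hab hne] at hr
  have hnil : Γ.path K a (Γ.valency a.fst) * Γ.path K a (Γ.valency a.fst) = 0 := by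
    have := path_mul_path (K := K) a (Γ.valency a.fst) (Γ.valency a.fst)
    rw [iterate_valency] at this
    rw [this, path_eq_zero (Nat.lt_add_of_pos_left (valency_pos a))]
  intro h
  refine idem_ne_zero (K := K) (Γ.edge a) ?_
  rw [← idem_mul_self, h, hr, smul_mul_smul_comm, hnil, smul_zero]

end Algebra

/-! ### Sequences of marked vertices -/

section Sequences

variable {V : Type v} {Γ : BrauerTree V}

variable (Γ) in
/-- Walks in the tree which start at the vertex `x` and never turn back along the edge they came
from.  The sequences of marked vertices of summands of source type on the `A`-cycle `x` are of
this form. -/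
def IsReducedWalk : V → List Γ.Dart → Prop
  | _, [] => True
  | x, a :: L => a.fst = x ∧ a.symm ∉ L.head? ∧ IsReducedWalk a.snd L

theorem isReducedWalk_of_isChain {x : V} {L : List Γ.Dart}
    (hx : ∀ a ∈ L.head?, a.fst = x) (h : L.IsChain fun a b => a.snd = b.fst ∧ a.symm ≠ b) :
    Γ.IsReducedWalk x L := by
  induction L generalizing x with
  | nil => trivial
  | cons a L ih =>
    obtain ⟨hhead, htail⟩ := List.isChain_cons.1 h
    exact ⟨hx a rfl, fun ha => (hhead _ ha).2 rfl, ih (fun b hb => (hhead b hb).1.symm) htail⟩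

theorem lexLt_irrefl (p : ℕ) (g : Γ.Dart) (L : List Γ.Dart) : ¬ Γ.lexLt p g L L := by
  induction L generalizing p g with
  | nil => simp [lexLt]
  | cons a L ih => simp [lexLt, ih]

theorem lexLt_trans {p : ℕ} {g : Γ.Dart} {L L' L'' : List Γ.Dart} (h : Γ.lexLt p g L L')
    (h' : Γ.lexLt p g L' L'') : Γ.lexLt p g L L'' := by
  induction L generalizing p g L' L'' with
  | nil => cases L' <;> cases L'' <;> simp_all [lexLt]
  | cons a L ih =>
    match L', L'' with
    | [], [] => exact h
    | [], _ :: _ => exact absurd h' h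
    | _ :: _, [] => exact h'
    | b :: L', c :: L'' =>
      rcases h with ⟨rfl, h⟩ | ⟨hab, h⟩
      · rcases h' with ⟨rfl, h'⟩ | ⟨hac, h'⟩
        · exact Or.inl ⟨rfl, ih h h'⟩
        · exact Or.inr ⟨hac, h'⟩
      · rcases h' with ⟨rfl, -⟩ | ⟨-, h'⟩
        · exact Or.inr ⟨hab, h⟩
        · exact Or.inr ⟨fun hac => lt_asymm h (hac ▸ h'), h'.trans h⟩

theorem lexLt_trichotomous (p : ℕ) {g : Γ.Dart} {L L' : List Γ.Dart}
    (hL : Γ.IsReducedWalk g.fst L) (hL' : Γ.IsReducedWalk g.fst L') :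
    Γ.lexLt p g L L' ∨ L = L' ∨ Γ.lexLt p g L' L := by
  induction L generalizing p g L' with
  | nil =>
    cases L' with
    | nil => exact Or.inr (Or.inl rfl)
    | cons b L' => simpa [lexLt] using em (Even p)
  | cons a L ih =>
    cases L' with
    | nil => simpa [lexLt] using (em (Even p)).symm
    | cons b L' =>
      by_cases hab : a = b
      · subst hab
        rcases ih (p + 1) (g := a.symm) hL.2.2 hL'.2.2 with h | h | h
        · exact Or.inl (Or.inl ⟨rfl, h⟩)
        · exact Or.inr (Or.inl (by rw [h]))
        · exact Or.inr (Or.inr (Or.inl ⟨rfl, h⟩))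
      · rcases lt_trichotomy (Γ.steps g a) (Γ.steps g b) with h | h | h
        · exact Or.inr (Or.inr (Or.inr ⟨Ne.symm hab, h⟩))
        · exact absurd (steps_right_injective hL.1.symm hL'.1.symm h) hab
        · exact Or.inl (Or.inr ⟨hab, h⟩)

theorem steps_le_of_lexLt {p : ℕ} {g a b : Γ.Dart} {L L' : List Γ.Dart}
    (h : Γ.lexLt p g (b :: L') (a :: L)) : Γ.steps g a ≤ Γ.steps g b := by
  rcases h with ⟨rfl, -⟩ | ⟨-, h⟩
  · exact le_rfl
  · exact h.le

theorem ne_nil_of_lexLt {p : ℕ} (hp : ¬ Even p) {g : Γ.Dart} {L L' : List Γ.Dart}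
    (h : Γ.lexLt p g L L') : L ≠ [] := by
  rintro rfl
  cases L' with
  | nil => exact h
  | cons => exact hp h

theorem lexLt_cons_self {p : ℕ} {g a : Γ.Dart} {L L' : List Γ.Dart} :
    Γ.lexLt p g (a :: L) (a :: L') ↔ Γ.lexLt (p + 1) a.symm L L' := by
  simp [lexLt]

variable (K : Type u) [Field K]

/-- The path of the quiver along the string between the terms at positions `j` and `j + 1` of a
sequence whose first term is a source if `p` is even and a sink otherwise; zero if there are no
such terms. -/
noncomputable def stringPath : ℕ → List Γ.Dart → ℕ → Γ.Alg K
  | p, a :: b :: _, 0 => open Classical in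
      if Even p then Γ.arc K a.symm b else Γ.arc K b a.symm
  | p, _ :: L, j + 1 => stringPath (p + 1) L j
  | _, _, _ => 0

open scoped Classical in
/-- The component at position `j` of the morphism between the complexes of two sequences: the
arc between the terms of the sequences if all the previous terms coincide, and zero otherwise. -/
noncomputable def commonArc : List Γ.Dart → List Γ.Dart → ℕ → Γ.Alg K
  | a :: _, b :: _, 0 => Γ.arc K a b
  | a :: L, b :: L', j + 1 => if a = b then commonArc L L' j else 0
  | _, _, _ => 0

variable {K}

theorem stringPath_cons_succ (p : ℕ) (a : Γ.Dart) (L : List Γ.Dart) (j : ℕ) :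
    stringPath K p (a :: L) (j + 1) = stringPath K (p + 1) L j := by
  rw [stringPath]

theorem stringPath_nil (p j : ℕ) : stringPath K p ([] : List Γ.Dart) j = 0 := by
  simp [stringPath]

theorem stringPath_of_lt (p : ℕ) {L : List Γ.Dart} {j : ℕ} (hj : j + 1 < L.length) :
    stringPath K p L j =
      if Even (p + j) then Γ.arc K L[j].symm L[j + 1] else Γ.arc K L[j + 1] L[j].symm := by
  induction j generalizing p L with
  | zero =>
    match L, hj with
    | _ :: _ :: _, _ => simp [stringPath]
  | succ j ih =>
    match L, hj with
    | _ :: _, hj =>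
      rw [stringPath_cons_succ, ih (p + 1) (by simpa using hj)]
      simp [add_assoc, add_comm 1 j]

theorem stringPath_of_le (p : ℕ) {L : List Γ.Dart} {j : ℕ} (hj : L.length ≤ j + 1) :
    stringPath K p L j = 0 := by
  induction j generalizing p L with
  | zero =>
    match L, hj with
    | [], _ => exact stringPath_nil p 0
    | [_], _ => simp [stringPath]
  | succ j ih =>
    match L, hj with
    | [], _ => exact stringPath_nil p _
    | _ :: _, hj => rw [stringPath_cons_succ, ih _ (by simpa using hj)]

theorem commonArc_nil_left (L : List Γ.Dart) (j : ℕ) : commonArc K [] L j = 0 := by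
  simp [commonArc]

theorem commonArc_nil_right (L : List Γ.Dart) (j : ℕ) : commonArc K L [] j = 0 := by
  simp [commonArc]

theorem commonArc_cons_self (a : Γ.Dart) (L L' : List Γ.Dart) (j : ℕ) :
    commonArc K (a :: L) (a :: L') (j + 1) = commonArc K L L' j := by
  rw [commonArc, if_pos rfl]

theorem commonArc_cons_of_ne {a b : Γ.Dart} (hab : a ≠ b) (L L' : List Γ.Dart) (j : ℕ) :
    commonArc K (a :: L) (b :: L') (j + 1) = 0 := by
  rw [commonArc, if_neg hab]

theorem commonArc_eq_zero {L L' : List Γ.Dart} {j : ℕ} (hj : L.length ≤ j ∨ L'.length ≤ j) :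
    commonArc K L L' j = 0 := by
  induction j generalizing L L' with
  | zero =>
    rcases hj with hj | hj <;> rw [List.eq_nil_of_length_eq_zero (Nat.le_zero.1 hj)]
    · exact commonArc_nil_left L' 0
    · exact commonArc_nil_right L 0
  | succ j ih =>
    match L, L' with
    | [], _ => exact commonArc_nil_left _ _
    | _, [] => exact commonArc_nil_right _ _
    | _ :: _, _ :: _ => rw [commonArc, ih (by simpa using hj), ite_self]

theorem idem_mul_commonArc {L : List Γ.Dart} (L' : List Γ.Dart) {j : ℕ} (hj : j < L.length) :
    Γ.idem K (Γ.edge L[j]) * commonArc K L L' j = commonArc K L L' j := by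
  induction j generalizing L L' with
  | zero =>
    match L, L', hj with
    | _, [], _ => rw [commonArc_nil_right, mul_zero]
    | a :: _, b :: _, _ => exact idem_mul_arc a b
  | succ j ih =>
    match L, L', hj with
    | _, [], _ => rw [commonArc_nil_right, mul_zero]
    | a :: L, b :: L', hj =>
      by_cases hab : a = b
      · subst hab
        rw [commonArc_cons_self]
        exact ih L' (by simpa using hj)
      · rw [commonArc_cons_of_ne hab, mul_zero]

theorem stringPath_zero_mul_commonArc_one {p : ℕ} (hp : Even p) {g : Γ.Dart}
    {L L' : List Γ.Dart} (hL : Γ.IsReducedWalk g.fst L) (hL' : Γ.IsReducedWalk g.fst L')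
    (hlt : Γ.lexLt (p + 1) g L' L) :
    stringPath K p L 0 * commonArc K L L' 1 = commonArc K L L' 0 * stringPath K p L' 0 := by
  match L, L' with
  | [], _ => simp only [stringPath_nil, commonArc_nil_left, zero_mul]
  | _, [] => simp only [stringPath_nil, commonArc_nil_right, mul_zero]
  | a :: L, b :: L' =>
    by_cases hab : a = b
    · subst hab
      rw [lexLt_cons_self] at hlt
      match L, L' with
      | _, [] => simp [stringPath, commonArc]
      | [], _ :: _ => simp [lexLt, parity_simps, hp] at hlt
      | c :: L, d :: L' =>
        have hac : a.symm.fst = c.fst := hL.2.2.1.symm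
        have had : a.symm.fst = d.fst := hL'.2.2.1.symm
        simp only [stringPath, commonArc, if_pos hp, if_true, arc_self]
        rw [← edge_symm, idem_mul_arc,
          arc_mul_arc hac (steps_add_of_le hac had (steps_le_of_lexLt hlt))]
    · match L' with
      | [] => simp [stringPath, commonArc_cons_of_ne hab]
      | d :: L' =>
        simp only [stringPath, commonArc, if_pos hp, if_neg hab, mul_zero]
        rw [arc_mul_arc_symm (hL.1.trans hL'.1.symm) hL'.2.2.1.symm hab
          fun h => hL'.2.1 (by simp [h])]

theorem stringPath_zero_mul_commonArc_zero {p : ℕ} (hp : ¬ Even p) {g : Γ.Dart}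
    {L L' : List Γ.Dart} (hL : Γ.IsReducedWalk g.fst L) (hL' : Γ.IsReducedWalk g.fst L')
    (hlt : Γ.lexLt (p + 1) g L' L) :
    stringPath K p L 0 * commonArc K L L' 0 = commonArc K L L' 1 * stringPath K p L' 0 := by
  match L, L' with
  | [], _ => simp only [stringPath_nil, commonArc_nil_left, zero_mul]
  | _, [] => simp only [stringPath_nil, commonArc_nil_right, mul_zero]
  | a :: L, b :: L' =>
    by_cases hab : a = b
    · subst hab
      rw [lexLt_cons_self] at hlt
      match L, L' with
      | [], _ => simp [stringPath, commonArc]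
      | _ :: _, [] => simp [lexLt, parity_simps, hp] at hlt
      | c :: L, d :: L' =>
        have hac : a.symm.fst = c.fst := hL.2.2.1.symm
        have had : a.symm.fst = d.fst := hL'.2.2.1.symm
        have hca : c ≠ a.symm := fun h => hL.2.1 (by simp [h])
        have hda : d ≠ a.symm := fun h => hL'.2.1 (by simp [h])
        simp only [stringPath, commonArc, if_neg hp, if_true, arc_self]
        rw [← edge_symm, arc_mul_idem hac.symm, arc_mul_arc (hac.symm.trans had)
          (steps_add_to_start hac had hca hda (steps_le_of_lexLt hlt))]
    · match L with
      | [] => simp [stringPath, commonArc_cons_of_ne hab]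
      | c :: L =>
        simp only [stringPath, commonArc, if_neg hp, if_neg hab, zero_mul]
        exact arc_mul_arc_symm (b := a.symm) hL.2.2.1 (hL.1.trans hL'.1.symm)
          (fun h => hL.2.1 (by simp [h])) hab

theorem stringPath_mul_commonArc_of_even {p j : ℕ} (hp : Even (p + j)) {g : Γ.Dart}
    {L L' : List Γ.Dart} (hL : Γ.IsReducedWalk g.fst L) (hL' : Γ.IsReducedWalk g.fst L')
    (hlt : Γ.lexLt (p + 1) g L' L) :
    stringPath K p L j * commonArc K L L' (j + 1) =
      commonArc K L L' j * stringPath K p L' j := by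
  induction j generalizing p g L L' with
  | zero => exact stringPath_zero_mul_commonArc_one hp hL hL' hlt
  | succ j ih =>
    match L, L' with
    | [], _ => simp only [stringPath_nil, commonArc_nil_left, zero_mul]
    | _, [] => simp only [stringPath_nil, commonArc_nil_right, mul_zero]
    | a :: L, b :: L' =>
      by_cases hab : a = b
      · subst hab
        simp only [stringPath_cons_succ, commonArc_cons_self]
        exact ih (by rwa [Nat.add_right_comm]) (g := a.symm) hL.2.2 hL'.2.2
          (lexLt_cons_self.1 hlt)
      · simp only [commonArc_cons_of_ne hab, mul_zero, zero_mul]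

theorem stringPath_mul_commonArc_of_not_even {p j : ℕ} (hp : ¬ Even (p + j)) {g : Γ.Dart}
    {L L' : List Γ.Dart} (hL : Γ.IsReducedWalk g.fst L) (hL' : Γ.IsReducedWalk g.fst L')
    (hlt : Γ.lexLt (p + 1) g L' L) :
    stringPath K p L j * commonArc K L L' j =
      commonArc K L L' (j + 1) * stringPath K p L' j := by
  induction j generalizing p g L L' with
  | zero => exact stringPath_zero_mul_commonArc_zero hp hL hL' hlt
  | succ j ih =>
    match L, L' with
    | [], _ => simp only [stringPath_nil, commonArc_nil_left, zero_mul]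
    | _, [] => simp only [stringPath_nil, commonArc_nil_right, mul_zero]
    | a :: L, b :: L' =>
      by_cases hab : a = b
      · subst hab
        simp only [stringPath_cons_succ, commonArc_cons_self]
        exact ih (by rwa [Nat.add_right_comm]) (g := a.symm) hL.2.2 hL'.2.2
          (lexLt_cons_self.1 hlt)
      · simp only [commonArc_cons_of_ne hab, mul_zero, zero_mul]

end Sequences

/-! ### Complexes of sequences -/

section Complexes

variable {V : Type v} {Γ : BrauerTree V} (K : Type u) [Field K]

/-- The generator of the projective module `A e`. -/
noncomputable def projGen (e : Γ.Edge) : Γ.proj K e :=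
  ⟨Γ.idem K e, Ideal.subset_span (Set.mem_singleton _)⟩

section Matrix

variable {ι κ μ : Type*} [Fintype ι] {K}

/-- The homomorphism between sums of indecomposable projective modules given by a matrix. -/
noncomputable def matMap (a : ι → Γ.Edge) (b : κ → Γ.Edge) (M : ι → κ → Γ.Alg K) :
    ((k : ι) → Γ.proj K (a k)) →ₗ[Γ.Alg K] ((l : κ) → Γ.proj K (b l)) :=
  LinearMap.pi fun l => ∑ k, (Γ.mulPath K _ _ (M k l)).comp (LinearMap.proj k)

theorem coe_matMap (a : ι → Γ.Edge) (b : κ → Γ.Edge) (M : ι → κ → Γ.Alg K)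
    (s : (k : ι) → Γ.proj K (a k)) (l : κ) :
    (matMap a b M s l : Γ.Alg K) = ∑ k, (s k : Γ.Alg K) * (M k l * Γ.idem K (b l)) := by
  have h (k : ι) : (Γ.mulPath K (a k) (b l) (M k l) (s k) : Γ.Alg K) =
      s k * (M k l * Γ.idem K (b l)) := rfl
  simp [matMap, LinearMap.sum_apply, h]

theorem coe_matMap_single [DecidableEq ι] (a : ι → Γ.Edge) (b : κ → Γ.Edge)
    (M : ι → κ → Γ.Alg K) (k : ι) (s : Γ.proj K (a k)) (l : κ) :
    (matMap a b M (Pi.single k s) l : Γ.Alg K) = s * (M k l * Γ.idem K (b l)) := by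
  rw [coe_matMap, Fintype.sum_eq_single k fun k' hk' => ?_, Pi.single_eq_same]
  rw [Pi.single_eq_of_ne hk', Submodule.coe_zero, zero_mul]

theorem matMap_comp [Fintype κ] (a : ι → Γ.Edge) {b : κ → Γ.Edge} (c : μ → Γ.Edge)
    (M : ι → κ → Γ.Alg K) {N : κ → μ → Γ.Alg K} (hN : ∀ m l, Γ.idem K (b m) * N m l = N m l) :
    (matMap b c N).comp (matMap a b M) = matMap a c fun k l => ∑ m, M k m * N m l := by
  refine LinearMap.ext fun s => funext fun l => Subtype.ext ?_
  simp only [LinearMap.comp_apply, coe_matMap, Finset.sum_mul, Finset.mul_sum]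
  rw [Finset.sum_comm]
  refine Finset.sum_congr rfl fun k _ => Finset.sum_congr rfl fun m _ => ?_
  simp only [mul_assoc]
  rw [← mul_assoc (Γ.idem K (b m)), hN]

end Matrix

theorem sum_ite_val_eq {R : Type*} [AddCommMonoid R] {n : ℕ} {P : ℕ → Prop} [DecidablePred P]
    (F : ℕ → R) {l : ℕ} (hl : P l) (h : n ≤ l → F l = 0) :
    ∑ m : {m : Fin n // P m.val}, (if m.1.val = l then F m.1.val else 0) = F l := by
  by_cases hn : l < n
  · rw [Fintype.sum_eq_single ⟨⟨l, hn⟩, hl⟩ fun m hm =>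
      if_neg fun h => hm (Subtype.ext (Fin.ext h)), if_pos rfl]
  · rw [h (not_lt.1 hn)]
    exact Finset.sum_eq_zero fun m _ => if_neg fun (h : m.1.val = l) => hn (h ▸ m.1.2)

/-- Positions of the sources of a sequence. -/
abbrev Sources (L : List Γ.Dart) := {k : Fin L.length // Even k.val}

/-- Positions of the sinks of a sequence. -/
abbrev Sinks (L : List Γ.Dart) := {k : Fin L.length // ¬ Even k.val}

/-- The path from the source at position `k` to the sink at position `l`, if these are
neighbours, and zero otherwise. -/
noncomputable def seqEntry (L : List Γ.Dart) (k l : ℕ) : Γ.Alg K :=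
  if l = k + 1 then stringPath K 0 L k else if k = l + 1 then stringPath K 0 L l else 0

/-- The differential of the complex of a sequence. -/
noncomputable def seqDiff (L : List Γ.Dart) :
    ((k : Sources L) → Γ.proj K (Γ.edge L[k.1])) →ₗ[Γ.Alg K]
      ((l : Sinks L) → Γ.proj K (Γ.edge L[l.1])) :=
  matMap _ _ fun k l => seqEntry K L k.1.val l.1.val

/-- The two-term complex of a sequence.  It generalizes both the complexes of diagrams and, up to
isomorphism, the stalk complexes. -/
noncomputable abbrev seqComplex (L : List Γ.Dart) : Γ.Cplx K :=
  HomologicalComplex.double (ModuleCat.ofHom (seqDiff K L))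
    (show (ComplexShape.up ℤ).Rel 0 1 from zero_add 1)

theorem SourceDiagram.entry_eq_seqEntry (D : Γ.SourceDiagram) (k : D.Src) (l : D.Snk) :
    D.entry K k l = seqEntry K D.marked k.1.val l.1.val := by
  rw [entry, seqEntry]
  split_ifs with h1 h2
  · rw [stringPath_of_lt 0 (h1 ▸ l.1.2), if_pos (by simpa using k.2)]
    simp [h1]
  · rw [stringPath_of_lt 0 (h2 ▸ k.1.2), if_neg (by simpa using l.2)]
    simp [h2]
  · rfl

theorem SourceDiagram.complex_eq_seqComplex (D : Γ.SourceDiagram) :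
    D.complex K = seqComplex K D.marked := by
  have h : D.diff K = seqDiff K D.marked := by
    simp only [seqDiff, ← entry_eq_seqEntry]
    rfl
  rw [SourceDiagram.complex, h, seqComplex]

instance (d : Γ.Dart) : IsEmpty (Sinks [d]) :=
  ⟨fun l => l.2 (by simp)⟩

instance (d : Γ.Dart) : Unique (Sources [d]) where
  default := ⟨⟨0, Nat.zero_lt_one⟩, Even.zero⟩
  uniq _ := Subtype.ext (Subsingleton.elim (α := Fin 1) _ _)

/-- The complex of a sequence with one term is a stalk complex. -/
noncomputable def seqComplexSingletonIso (d : Γ.Dart) :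
    seqComplex K [d] ≅ stalk K (Γ.edge d) :=
  doubleIsoSingle _ _ zero_ne_one (ModuleCat.isZero_of_subsingleton _)
    (LinearEquiv.piUnique (Γ.Alg K)
      fun k : Sources [d] => Γ.proj K (Γ.edge [d][k.1])).toModuleIso

/-! ### Morphisms between complexes of sequences -/

variable {K}

theorem idem_mul_seqEntry {L : List Γ.Dart} (k : Sources L) (l : ℕ) :
    Γ.idem K (Γ.edge L[k.1]) * seqEntry K L k.1.val l = seqEntry K L k.1.val l := by
  obtain ⟨⟨k, hk⟩, heven⟩ := k
  dsimp only [Fin.getElem_fin] at heven ⊢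
  rw [seqEntry]
  split_ifs with h1 h2
  · by_cases hlt : k + 1 < L.length
    · rw [stringPath_of_lt 0 hlt, zero_add, if_pos heven, ← edge_symm, idem_mul_arc]
    · rw [stringPath_of_le 0 (not_lt.1 hlt), mul_zero]
  · subst h2
    rw [stringPath_of_lt 0 hk, zero_add, if_neg (by simpa [parity_simps] using heven),
      idem_mul_arc]
  · rw [mul_zero]

theorem seqEntry_mul_commonArc {g : Γ.Dart} {L L' : List Γ.Dart}
    (hL : Γ.IsReducedWalk g.fst L) (hL' : Γ.IsReducedWalk g.fst L') (hlt : Γ.lexLt 1 g L' L)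
    {k l : ℕ} (hk : Even k) (hl : ¬ Even l) :
    seqEntry K L k l * commonArc K L L' l = commonArc K L L' k * seqEntry K L' k l := by
  rw [seqEntry, seqEntry]
  split_ifs with h1 h2
  · rw [h1]
    exact stringPath_mul_commonArc_of_even (by rwa [zero_add]) hL hL' hlt
  · rw [h2]
    exact stringPath_mul_commonArc_of_not_even (by rwa [zero_add]) hL hL' hlt
  · rw [zero_mul, mul_zero]

/-- The component on the terms at the positions satisfying `P` of the morphism between the
complexes of two sequences. -/
noncomputable def seqMapOn (P : ℕ → Prop) [DecidablePred P] (L L' : List Γ.Dart) :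
    ((k : {k : Fin L.length // P k.val}) → Γ.proj K (Γ.edge L[k.1])) →ₗ[Γ.Alg K]
      ((k : {k : Fin L'.length // P k.val}) → Γ.proj K (Γ.edge L'[k.1])) :=
  matMap _ _ fun k m => if k.1.val = m.1.val then commonArc K L L' m.1.val else 0

theorem idem_mul_ite_commonArc {L L' : List Γ.Dart} (k : Fin L.length) (m : ℕ) :
    Γ.idem K (Γ.edge L[k]) * (if k.val = m then commonArc K L L' m else 0) =
      if k.val = m then commonArc K L L' m else 0 := by
  split_ifs with h
  · subst h
    exact idem_mul_commonArc L' k.2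
  · rw [mul_zero]

theorem seqMapOn_comp_seqDiff {g : Γ.Dart} {L L' : List Γ.Dart}
    (hL : Γ.IsReducedWalk g.fst L) (hL' : Γ.IsReducedWalk g.fst L') (hlt : Γ.lexLt 1 g L' L) :
    (seqMapOn (fun k => ¬ Even k) L L').comp (seqDiff K L) =
      (seqDiff K L').comp (seqMapOn Even L L') := by
  unfold seqMapOn seqDiff
  rw [matMap_comp _ _ _ fun k l => idem_mul_ite_commonArc k.1 l.1.val,
    matMap_comp _ _ _ fun k l => idem_mul_seqEntry k l.1.val]
  congr 1
  funext k l
  simp only [mul_ite, mul_zero, ite_mul, zero_mul, @eq_comm ℕ k.1.val]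
  rw [sum_ite_val_eq (P := fun n => ¬ Even n)
      (fun m => seqEntry K L k.1.val m * commonArc K L L' l.1.val) l.2
      (fun h => by rw [commonArc_eq_zero (Or.inl h), mul_zero]),
    sum_ite_val_eq (P := Even) (fun m => commonArc K L L' m * seqEntry K L' m l.1.val) k.2
      (fun h => by rw [commonArc_eq_zero (Or.inr h), zero_mul])]
  exact seqEntry_mul_commonArc hL hL' hlt k.2 l.2

theorem seqMapOn_comp (P : ℕ → Prop) [DecidablePred P] (L L' L'' : List Γ.Dart) :
    (seqMapOn P L' L'').comp (seqMapOn P L L') = matMap (K := K) _ _ fun k m =>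
      if k.1.val = m.1.val then commonArc K L L' k.1.val * commonArc K L' L'' k.1.val else 0 := by
  unfold seqMapOn
  rw [matMap_comp _ _ _ fun k l => idem_mul_ite_commonArc k.1 l.1.val]
  congr 1
  funext k l
  simp only [ite_mul, zero_mul, @eq_comm ℕ k.1.val]
  rw [sum_ite_val_eq (fun m => commonArc K L L' m *
    if m = l.1.val then commonArc K L' L'' l.1.val else 0) k.2
    fun h => by rw [commonArc_eq_zero (Or.inr h), zero_mul]]
  split_ifs with h h' h' <;> grind

variable (K) in
/-- The morphism from the complex of a sequence to the complex of a smaller one. -/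
noncomputable def seqMap {g : Γ.Dart} {L L' : List Γ.Dart} (hL : Γ.IsReducedWalk g.fst L)
    (hL' : Γ.IsReducedWalk g.fst L') (hlt : Γ.lexLt 1 g L' L) :
    seqComplex K L ⟶ seqComplex K L' :=
  doubleMap (show (ComplexShape.up ℤ).Rel 0 1 from zero_add 1) zero_ne_one
    (ModuleCat.ofHom (seqMapOn Even L L')) (ModuleCat.ofHom (seqMapOn (fun k => ¬ Even k) L L')) (by
      rw [← ModuleCat.ofHom_comp, ← ModuleCat.ofHom_comp, seqMapOn_comp_seqDiff hL hL' hlt])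

/-- The position of the first source of a nonempty sequence. -/
abbrev firstSource (a : Γ.Dart) (L : List Γ.Dart) : Sources (a :: L) :=
  ⟨⟨0, Nat.succ_pos _⟩, Even.zero⟩

theorem exists_seqDiff_single_eq_smul (a : Γ.Dart) (L : List Γ.Dart) :
    ∃ t, seqDiff K (a :: L) (Pi.single (firstSource a L) (projGen K _)) =
      stringPath K 0 (a :: L) 0 • t := by
  refine ⟨fun l => if l.1.val = 1 then projGen K _ else 0, funext fun l => Subtype.ext ?_⟩
  have hentry : seqEntry K (a :: L) 0 l.1.val =
      if l.1.val = 1 then stringPath K 0 (a :: L) 0 else 0 := by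
    simp [seqEntry]
  have hidem := idem_mul_seqEntry (K := K) (firstSource a L) l.1.val
  rw [seqDiff, coe_matMap_single, projGen, ← mul_assoc, hidem, hentry]
  split_ifs with hl
  · simp [projGen, hl]
  · simp [hl]

theorem exists_stringPath_eq_path_mul {x : V} {a : Γ.Dart} {L : List Γ.Dart}
    (h : Γ.IsReducedWalk x (a :: L)) :
    ∃ l s, 0 < l ∧ stringPath K 0 (a :: L) 0 = Γ.path K a.symm l * s := by
  match L, h with
  | [], _ => exact ⟨1, 0, Nat.one_pos, by rw [stringPath_of_le 0 le_rfl, mul_zero]⟩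
  | b :: L, ⟨_, hab, hb, _⟩ =>
    refine ⟨Γ.steps a.symm b, 1, steps_pos hb.symm fun h => hab (by simp [h]), ?_⟩
    rw [stringPath_of_lt 0 (by simp), if_pos (by simp), mul_one, ← arc_eq_path]
    simp

theorem coe_seqMapOn_comp_single {a b c : Γ.Dart} (L L' L'' : List Γ.Dart)
    (hab : a.fst = b.fst) (hbc : b.fst = c.fst)
    (h : Γ.steps a b + Γ.steps b c = Γ.steps a c) :
    ((seqMapOn Even (b :: L') (c :: L'')).comp (seqMapOn Even (a :: L) (b :: L'))
      (Pi.single (firstSource a L) (projGen K _)) (firstSource c L'') : Γ.Alg K) =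
        Γ.path K a (Γ.steps a c) := by
  rw [seqMapOn_comp, coe_matMap_single, if_pos rfl]
  change Γ.idem K (Γ.edge a) * (Γ.arc K a b * Γ.arc K b c * Γ.idem K (Γ.edge c)) = _
  rw [arc_mul_arc hab h, arc_mul_idem (hab.trans hbc), idem_mul_arc, arc_eq_path]

theorem quotient_map_seqMap_comp_ne_zero {g : Γ.Dart} {L L' L'' : List Γ.Dart}
    (hL : Γ.IsReducedWalk g.fst L) (hL' : Γ.IsReducedWalk g.fst L')
    (hL'' : Γ.IsReducedWalk g.fst L'') (hlt : Γ.lexLt 1 g L' L) (hlt' : Γ.lexLt 1 g L'' L')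
    (hne : L ≠ []) :
    (HomotopyCategory.quotient _ _).map (seqMap K hL hL' hlt ≫ seqMap K hL' hL'' hlt') ≠ 0 := by
  intro h0
  obtain ⟨a, L, rfl⟩ := List.exists_cons_of_ne_nil hne
  obtain ⟨b, L', rfl⟩ := List.exists_cons_of_ne_nil (ne_nil_of_lexLt Nat.not_even_one hlt)
  obtain ⟨c, L'', rfl⟩ := List.exists_cons_of_ne_nil (ne_nil_of_lexLt Nat.not_even_one hlt')
  have hga := hL.1.symm
  have hgb := hL'.1.symm
  have hgc := hL''.1.symm
  have habc : Γ.steps a b + Γ.steps b c = Γ.steps a c := by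
    have hab := steps_le_of_lexLt hlt
    have hbc := steps_le_of_lexLt hlt'
    have := steps_add_of_le hga hgb hab
    have := steps_add_of_le hgb hgc hbc
    have := steps_add_of_le hga hgc (hab.trans hbc)
    omega
  rw [seqMap, seqMap, doubleMap_comp_doubleMap] at h0
  obtain ⟨s, hs⟩ := exists_eq_comp_of_quotient_map_doubleMap_eq_zero h0
  obtain ⟨t, ht⟩ := exists_seqDiff_single_eq_smul (K := K) a L
  obtain ⟨l, r, hl, hr⟩ := exists_stringPath_eq_path_mul (K := K) hL
  refine path_ne_path_symm_mul (K := K) (steps_lt_valency (hga.symm.trans hgc)) hl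
    (r * (s.hom t (firstSource c L'') : Γ.Alg K)) ?_
  rw [← coe_seqMapOn_comp_single L L' L'' (hga.symm.trans hgb) (hgb.symm.trans hgc) habc,
    ← mul_assoc, ← hr]
  have hval : _ = s.hom (seqDiff K _ _) :=
    LinearMap.congr_fun (congrArg ModuleCat.Hom.hom hs) (Pi.single (firstSource a L) (projGen K _))
  rw [ht, map_smul] at hval
  exact congrArg Subtype.val (congrFun hval (firstSource c L''))

end Complexes

/-! ### Summands of source type -/

section Summands

variable {V : Type v} {Γ : BrauerTree V} {K : Type u} [Field K] {T : Γ.Cplx K}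
  {V' : Type w} {Γ' : BrauerTree V'} {φ : EndAlg T ≃ₐ[K] Γ'.Alg K}

theorem SummandAt.of_iso {e : Γ'.Edge} {X Y : Γ.Cplx K} (h : SummandAt φ e X) (f : X ≅ Y) :
    SummandAt φ e Y := by
  obtain ⟨i, p, hip, hpi⟩ := h
  let F : toHo X ≅ toHo Y := (HomotopyCategory.quotient _ _).mapIso f
  refine ⟨F.inv ≫ i, p ≫ F.hom, ?_, ?_⟩
  · rw [Category.assoc, reassoc_of% hip, F.inv_hom_id]
  · rw [Category.assoc, F.hom_inv_id_assoc, hpi]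

variable (φ) in
/-- The element of the Brauer tree algebra of `Γ'` corresponding to an endomorphism of `T`. -/
noncomputable def elemOf (u : toHo T ⟶ toHo T) : Γ'.Alg K :=
  φ (MulOpposite.op u)

theorem elemOf_comp (u w : toHo T ⟶ toHo T) : elemOf φ (u ≫ w) = elemOf φ u * elemOf φ w :=
  map_mul φ (MulOpposite.op (End.of u)) (MulOpposite.op (End.of w))

theorem elemOf_injective : Function.Injective (elemOf φ) :=
  φ.injective.comp MulOpposite.op_injective

theorem SummandAt.exists_retraction {e : Γ'.Edge} {X : Γ.Cplx K} (h : SummandAt φ e X) :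
    ∃ (i : toHo X ⟶ toHo T) (p : toHo T ⟶ toHo X),
      i ≫ p = 𝟙 (toHo X) ∧ elemOf φ (p ≫ i) = Γ'.idem K e := by
  obtain ⟨i, p, hip, hpi⟩ := h
  exact ⟨i, p, hip, by rw [hpi]; exact φ.apply_symm_apply _⟩

theorem exists_mul_eq_elemOf_comp {e₁ e₂ e₃ : Γ'.Edge} {X₁ X₂ X₃ : Γ.Cplx K}
    {i₁ : toHo X₁ ⟶ toHo T} {p₁ : toHo T ⟶ toHo X₁} {i₃ : toHo X₃ ⟶ toHo T}
    {p₃ : toHo T ⟶ toHo X₃} (hip₁ : i₁ ≫ p₁ = 𝟙 _) (hpi₁ : elemOf φ (p₁ ≫ i₁) = Γ'.idem K e₁)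
    (h₂ : SummandAt φ e₂ X₂) (hip₃ : i₃ ≫ p₃ = 𝟙 _) (hpi₃ : elemOf φ (p₃ ≫ i₃) = Γ'.idem K e₃)
    (u : toHo X₁ ⟶ toHo X₂) (w : toHo X₂ ⟶ toHo X₃) :
    ∃ s t, (Γ'.idem K e₁ * s * Γ'.idem K e₂) * (Γ'.idem K e₂ * t * Γ'.idem K e₃) =
      elemOf φ (p₁ ≫ u ≫ w ≫ i₃) := by
  obtain ⟨i₂, p₂, hip₂, hpi₂⟩ := h₂.exists_retraction
  refine ⟨elemOf φ (p₁ ≫ u ≫ i₂), elemOf φ (p₂ ≫ w ≫ i₃), ?_⟩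
  simp only [← hpi₁, ← hpi₂, ← hpi₃, ← elemOf_comp, Category.assoc, reassoc_of% hip₁,
    reassoc_of% hip₂, reassoc_of% hip₃]

theorem SummandAt.steps_add_of_comp_ne_zero {a b c : Γ'.Dart} (hab : a.fst = b.fst)
    (hbc : b.fst = c.fst) (hne : a ≠ b) (hne' : b ≠ c) (hac : a ≠ c) {X₁ X₂ X₃ : Γ.Cplx K}
    (h₁ : SummandAt φ (Γ'.edge a) X₁) (h₂ : SummandAt φ (Γ'.edge b) X₂)
    (h₃ : SummandAt φ (Γ'.edge c) X₃) {u : toHo X₁ ⟶ toHo X₂} {w : toHo X₂ ⟶ toHo X₃}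
    (h : u ≫ w ≠ 0) :
    Γ'.steps a b + Γ'.steps b c = Γ'.steps a c := by
  obtain ⟨i₁, p₁, hip₁, hpi₁⟩ := h₁.exists_retraction
  obtain ⟨i₃, p₃, hip₃, hpi₃⟩ := h₃.exists_retraction
  obtain ⟨s, t, hst⟩ := exists_mul_eq_elemOf_comp hip₁ hpi₁ h₂ hip₃ hpi₃ u w
  refine steps_add_of_mul_ne_zero hab hbc hne hne' hac (s := s) (t := t) fun h0 => h ?_
  have hzero : p₁ ≫ u ≫ w ≫ i₃ = 0 :=
    elemOf_injective (φ := φ) ((hst.symm.trans h0).trans (map_zero φ).symm)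
  calc u ≫ w
    _ = i₁ ≫ (p₁ ≫ u ≫ w ≫ i₃) ≫ p₃ := by
      simp only [Category.assoc, reassoc_of% hip₁, hip₃, Category.comp_id]
    _ = 0 := by rw [hzero, Limits.zero_comp, Limits.comp_zero]

theorem SummandAt.edge_unique {y : V'} {e f : Γ'.EdgeAt y} {X : Γ.Cplx K}
    (he : SummandAt φ e.1 X) (hf : SummandAt φ f.1 X) : e = f := by
  by_contra hne
  obtain ⟨i, p, hip, hpi⟩ := he.exists_retraction
  obtain ⟨s, t, hst⟩ := exists_mul_eq_elemOf_comp hip hpi hf hip hpi (𝟙 _) (𝟙 _)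
  rw [Category.id_comp, Category.id_comp, hpi, ← edge_dartAt e, ← edge_dartAt f] at hst
  exact idem_ne_mul (dartAt_fst_eq e f) (dartAt_injective.ne hne) s t hst.symm

theorem SourceDiagram.fst_eq_of_mem_head? (D : Γ.SourceDiagram) {x : V} (h : D.StartsAt x) :
    ∀ a ∈ D.marked.head?, a.fst = x := by
  obtain ⟨L, h2, hchain, hself⟩ := D
  match L, h2 with
  | a :: b :: L, h2 =>
    rintro _ ⟨⟩
    obtain ⟨hx, hother⟩ := h
    obtain ⟨hfst, hedge⟩ := (List.isChain_cons_cons.1 hchain).1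
    have hb : Γ.edge b ∈ stringVertices (a :: b :: L) 0 h2 := by
      rw [stringVertices, if_pos Even.zero]
      exact ⟨_, le_rfl, congrArg Γ.edge (iterate_steps (d := a.symm) hfst).symm⟩
    refine ((Sym2.mem_iff.1 hx).resolve_right fun hsnd => hedge ?_).symm
    have hxb : x = b.fst := hsnd.trans hfst
    exact (hother (Γ.edge b) ⟨0, h2, hb⟩ (hxb ▸ fst_mem_edge b)).symm

theorem SourceDiagram.isReducedWalk (D : Γ.SourceDiagram) {x : V} (h : D.StartsAt x) :
    Γ.IsReducedWalk x D.marked :=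
  isReducedWalk_of_isChain (D.fst_eq_of_mem_head? h) <|
    D.chain.imp fun a b hab => ⟨hab.1, fun hsymm => hab.2 (by rw [← hsymm, edge_symm])⟩

theorem SourceSummand.ne_nil {x : V} {e : Γ'.Edge} {L : List Γ.Dart}
    (h : SourceSummand φ x e L) : L ≠ [] := by
  rcases h with ⟨d, -, rfl, -⟩ | ⟨D, -, rfl, -⟩
  · exact List.cons_ne_nil d []
  · exact List.ne_nil_of_length_pos (Nat.zero_lt_two.trans_le D.two_le)

theorem SourceSummand.isReducedWalk {x : V} {e : Γ'.Edge} {L : List Γ.Dart}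
    (h : SourceSummand φ x e L) : Γ.IsReducedWalk x L := by
  rcases h with ⟨d, hd, rfl, -⟩ | ⟨D, hD, rfl, -⟩
  · exact ⟨hd, Option.not_mem_none _, trivial⟩
  · exact D.isReducedWalk hD

theorem SourceSummand.summandAt_seqComplex {x : V} {e : Γ'.Edge} {L : List Γ.Dart}
    (h : SourceSummand φ x e L) : SummandAt φ e (seqComplex K L) := by
  rcases h with ⟨d, -, rfl, hd⟩ | ⟨D, -, rfl, hD⟩
  · exact hd.of_iso (seqComplexSingletonIso K d).symm
  · exact D.complex_eq_seqComplex K ▸ hD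

end Summands

end BrauerTree

theorem cyclic_order_at_source_cycle_general
    {K : Type u} [Field K] {V : Type v} (Γ : BrauerTree V) (T : Γ.Cplx K)
    {V' : Type w} (Γ' : BrauerTree V') (φ : BrauerTree.EndAlg T ≃ₐ[K] Γ'.Alg K) (x : V) (y : V')
    (L : {e : Γ'.Edge // y ∈ (e : Sym2 V')} → List Γ.Dart)
    (hL : ∀ e, BrauerTree.SourceSummand φ x e.1 (L e)) (g : Γ.Dart) (hg : g.fst = x) :
    IsStrictTotalOrder {e : Γ'.Edge // y ∈ (e : Sym2 V')}
      (fun e f => Γ.lexLt 1 g (L e) (L f)) ∧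
    ∀ e f : {e : Γ'.Edge // y ∈ (e : Sym2 V')},
      (∃ d : Γ'.Dart, d.fst = y ∧ Γ'.edge d = e.1 ∧ Γ'.edge (Γ'.rot d) = f.1) ↔
        GluedNext (fun e f => Γ.lexLt 1 g (L e) (L f)) e f := by
  subst hg
  have hwalk e := (hL e).isReducedWalk
  have hsum e := (hL e).summandAt_seqComplex
  have hirrefl e : ¬ Γ.lexLt 1 g (L e) (L e) := BrauerTree.lexLt_irrefl 1 g (L e)
  have horder : IsStrictTotalOrder _ (fun e f => Γ.lexLt 1 g (L e) (L f)) :=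
    { trichotomous := fun e f hef hfe => by
        have heq := ((BrauerTree.lexLt_trichotomous 1 (hwalk e) (hwalk f)).resolve_left
          hef).resolve_right hfe
        exact (hsum e).edge_unique (heq ▸ hsum f)
      irrefl := hirrefl
      trans := fun _ _ _ => BrauerTree.lexLt_trans }
  refine ⟨horder, BrauerTree.rot_iff_gluedNext fun a b c hba hcb => ?_⟩
  have hca := BrauerTree.lexLt_trans hcb hba
  have hne {e f} (hlt : Γ.lexLt 1 g (L f) (L e)) :
      BrauerTree.dartAt e ≠ BrauerTree.dartAt f :=
    BrauerTree.dartAt_injective.ne fun h => hirrefl e (by rwa [← h] at hlt)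
  have hcomp := BrauerTree.quotient_map_seqMap_comp_ne_zero (K := K) (hwalk a) (hwalk b) (hwalk c)
    hba hcb (hL a).ne_nil
  rw [Functor.map_comp] at hcomp
  refine BrauerTree.SummandAt.steps_add_of_comp_ne_zero (φ := φ) (BrauerTree.dartAt_fst_eq a b)
    (BrauerTree.dartAt_fst_eq b c) (hne hba) (hne hcb) (hne hca) ?_ ?_ ?_ hcomp <;>
  simpa only [BrauerTree.edge_dartAt] using hsum _

theorem cyclic_order_at_source_cycle
    {K : Type u} [Field K] [IsAlgClosed K] {V : Type v} (Γ : BrauerTree V)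
    (T : Γ.Cplx K) (hT : BrauerTree.IsTwoTerm T) (htilt : BrauerTree.IsTilting T)
    (hbasic : BrauerTree.IsBasic T)
    -- the Brauer tree `Γ'` of the endomorphism algebra of `T`
    {V' : Type w} (Γ' : BrauerTree V') (φ : BrauerTree.EndAlg T ≃ₐ[K] Γ'.Alg K)
    -- the vertex `y` of `Γ'` is the cycle corresponding to the sources on the cycle `x` of `A`
    (x : V) (y : V') (hy : BrauerTree.IsSourceCycle φ x y)
    -- the ordered sets of vertices associated to the summands
    (L : {e : Γ'.Edge // y ∈ (e : Sym2 V')} → List Γ.Dart)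
    (hL : ∀ e, BrauerTree.SourceSummand φ x e.1 (L e))
    -- the vertex on the cycle `x` which is fixed as the greatest one
    (g : Γ.Dart) (hg : g.fst = x) :
    IsStrictTotalOrder {e : Γ'.Edge // y ∈ (e : Sym2 V')}
      (fun e f => Γ.lexLt 1 g (L e) (L f)) ∧
    ∀ e f : {e : Γ'.Edge // y ∈ (e : Sym2 V')},
      (∃ d : Γ'.Dart, d.fst = y ∧ Γ'.edge d = e.1 ∧ Γ'.edge (Γ'.rot d) = f.1) ↔
        GluedNext (fun e f => Γ.lexLt 1 g (L e) (L f)) e f :=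
  cyclic_order_at_source_cycle_general Γ T Γ' φ x y L hL g hg
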